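/- For every n ≥ 1 and every increment function δ of size n, the alt-Tamari poset Tam^δ_n contains exactly (1/(n+1))·binomial(2n,n) linear intervals of height 0, exactly binomial(2n−1, n−2) linear intervals of height 1, exactly 2·binomial(2n−k, n−k−1) linear intervals of height k for each k with 2 ≤ k < n, and no linear intervals of height k ≥ n. -/

import Mathlib

/-!
Common definitions.  A letter of a word is a `Bool`: `true` is an up step `u`,
`false` is a down step `d`.  Positions in words are 0-based.
-/

/-- A (possibly empty) Dyck word: as many `u`'s as `d`'s, and every
prefix has at least as many `u`'s as `d`'s. -/
def IsDyckPath (w : List Bool) : Prop :=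
  w.count true = w.count false ∧ ∀ p, p <+: w → p.count false ≤ p.count true

/-- A Dyck word of size `n`: `n` up steps, `n` down steps, every prefix has
at least as many `u`'s as `d`'s. -/
def IsDyckWord (n : ℕ) (w : List Bool) : Prop :=
  w.count true = n ∧ w.count false = n ∧ ∀ p, p <+: w → p.count false ≤ p.count true

/-- The set of Dyck words of size `n`. -/
def DyckSet (n : ℕ) : Set (List Bool) := {w | IsDyckWord n w}

/-- An increment function: a `{0,1}`-valued function (the paper's `δ : {1,…,n} → {0,1}`;
only the values on `{1,…,n}` are ever used). -/
def IsIncFun (δ : ℕ → ℤ) : Prop := ∀ i, δ i = 0 ∨ δ i = 1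

/-- The 0-based position in `w` of the `i`-th up step `u_i` (`i` is 1-based). -/
def upPos (w : List Bool) (i : ℕ) : ℕ :=
  ((List.range w.length).filter fun q => w.getD q false = true).getD (i - 1) 0

/-- `h_i(w)`: the (1-based, between 1 and 2n) position of the up step `u_i` in `w`. -/
def hpos (w : List Bool) (i : ℕ) : ℕ := upPos w i + 1

/-- The change of δ-altitude produced by the letter at position `q` of `w`:
the up step `u_i` contributes `δ i`, a down step contributes `-1`. -/
def stepVal (δ : ℕ → ℤ) (w : List Bool) (q : ℕ) : ℤ :=
  if w.getD q false = true then δ ((w.take (q + 1)).count true) else -1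

/-- The δ-elevation of the factor of `w` occupying positions `a, …, b-1`. -/
def elev (δ : ℕ → ℤ) (w : List Bool) (a b : ℕ) : ℤ :=
  ∑ q ∈ Finset.Ico a b, stepVal δ w q

/-- `C` is the δ-excursion of the up step of `w` at position `p`:
the smallest (nonempty) factor of `w` starting at `p` whose δ-elevation is `0`. -/
def IsDeltaExcAt (δ : ℕ → ℤ) (w : List Bool) (p : ℕ) (C : List Bool) : Prop :=
  w.getD p false = true ∧
  ∃ m, 0 < m ∧ p + m ≤ w.length ∧ C = (w.drop p).take m ∧
    elev δ w p (p + m) = 0 ∧ ∀ m', 0 < m' → m' < m → elev δ w p (p + m') ≠ 0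

/-- `C` is the excursion of the up step of `w` at position `p`: the smallest factor
of `w` starting at `p` that is itself a Dyck word. -/
def IsExcursionAt (w : List Bool) (p : ℕ) (C : List Bool) : Prop :=
  w.getD p false = true ∧
  ∃ m, 0 < m ∧ p + m ≤ w.length ∧ C = (w.drop p).take m ∧ IsDyckPath C ∧
    ∀ m', 0 < m' → m' < m → ¬ IsDyckPath ((w.drop p).take m')

/-- `ℓ_i(w; δ)`: the length of the δ-excursion of `u_i` in `w`. -/
noncomputable def excLen (δ : ℕ → ℤ) (w : List Bool) (i : ℕ) : ℕ :=
  sInf {m | 0 < m ∧ elev δ w (upPos w i) (upPos w i + m) = 0}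

/-- `Q` is the δ-rotation of `P` at some up step: `P = A d C B` with `d u_i` a valley
and `C` the δ-excursion of `u_i`, and `Q = A C d B`. -/
def DeltaRot (δ : ℕ → ℤ) (P Q : List Bool) : Prop :=
  ∃ A C B, P = A ++ false :: (C ++ B) ∧ Q = A ++ (C ++ false :: B) ∧
    IsDeltaExcAt δ P (A.length + 1) C

/-- The alt-Tamari order `Tam^δ`: reflexive transitive closure of δ-rotations. -/
def altLE (δ : ℕ → ℤ) : List Bool → List Bool → Prop :=
  Relation.ReflTransGen (DeltaRot δ)

/-- The Tamari order: the alt-Tamari order for `δ ≡ 1` (the δ-excursion of any up step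
is then its excursion). -/
def tamLE : List Bool → List Bool → Prop := altLE fun _ => 1

/-- The height (number of `u`'s minus number of `d`'s) of the length-`j` prefix of `w`. -/
def prefHeight (w : List Bool) (j : ℕ) : ℤ :=
  ((w.take j).count true : ℤ) - ((w.take j).count false : ℤ)

/-- The Dyck (inclusion) order: every prefix height of `P` is at most that of `Q`. -/
def dyckLE (P Q : List Bool) : Prop := ∀ j, prefHeight P j ≤ prefHeight Q j

/-- Strict version of a relation `le`. -/
def ltOf (le : List Bool → List Bool → Prop) (P Q : List Bool) : Prop :=
  le P Q ∧ ¬ le Q P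

/-- There is a strict chain `P = c 0 < c 1 < ⋯ < c k = Q` inside `S`. -/
def HasChainIn (S : Set (List Bool)) (le : List Bool → List Bool → Prop)
    (P Q : List Bool) (k : ℕ) : Prop :=
  ∃ c : ℕ → List Bool, c 0 = P ∧ c k = Q ∧ (∀ i ≤ k, c i ∈ S) ∧
    ∀ i < k, ltOf le (c i) (c (i + 1))

/-- The interval `[P,Q]` of the poset `(S, le)` has height `k`: `k` is the maximal
length of a chain from `P` to `Q`. -/
def IntervalHeight (S : Set (List Bool)) (le : List Bool → List Bool → Prop)
    (P Q : List Bool) (k : ℕ) : Prop :=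
  HasChainIn S le P Q k ∧ ∀ m, HasChainIn S le P Q m → m ≤ k

/-- The interval `[P,Q]` of the poset `(S, le)` is linear: it is totally ordered. -/
def LinearInterval (S : Set (List Bool)) (le : List Bool → List Bool → Prop)
    (P Q : List Bool) : Prop :=
  P ∈ S ∧ Q ∈ S ∧ le P Q ∧
  ∀ R R', R ∈ S → R' ∈ S → le P R → le R Q → le P R' → le R' Q → le R R' ∨ le R' R

/-- `Q` covers `P` in the poset `(S, le)`. -/
def CovIn (S : Set (List Bool)) (le : List Bool → List Bool → Prop)
    (P Q : List Bool) : Prop :=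
  P ∈ S ∧ Q ∈ S ∧ ltOf le P Q ∧ ∀ R ∈ S, ¬ (ltOf le P R ∧ ltOf le R Q)

/-- The number of valleys (factors `du`) of `w`. -/
def valleys (w : List Bool) : ℕ :=
  ((List.range w.length).filter fun q => !w.getD q true && w.getD (q + 1) false).length

/-! Record a Dyck word by the δ-altitudes at which its up steps start. A δ-rotation at `u_i` adds
one to this function on the up steps of the excursion of `u_i`, and changes nothing else. A linear
interval of height `k` is a path of `k` rotations all of which are forced. Of two consecutive
rotations, the second one can be performed first unless it is at the same up step or at the
excursion following that of the first one. So a forced path of length `k ≥ 2` either repeats the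
rotation at one up step `k` times (a left move), or moves `k` consecutive excursions over the down
step that precedes them, one after the other (a right move).

Left moves correspond to Dyck words `A dᵏ u B`. For right moves `A d T`, gathering at the front of
`T` the initial up steps of its `k` excursions turns `A d T` into a Dyck word `A d uᵏ X`, whatever
`δ` is, and mirroring relates these words to the former. Finally `A dᵏ u B ↦ B d A` gives the words
with `n - 1` up steps and `n - k + 1` down steps which go down to height `-2`; these are counted by
reflection. -/

namespace AltTamari

open Relation

/-! ### Linear intervals as unique paths -/

section UniquePath

variable {α β : Type*} {R : α → α → Prop} {k : ℕ} {a b : α}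

/-- `b` is reached from `a` by `k` steps of `R`, each of which is the only step of `R` that can be
continued to a path to `b`. -/
def UniquePath (R : α → α → Prop) : ℕ → α → α → Prop
  | 0, a, b => a = b
  | k + 1, a, b => ∃ c, R a c ∧ UniquePath R k c b ∧ ∀ c', R a c' → ReflTransGen R c' b → c' = c

theorem UniquePath.le (h : UniquePath R k a b) : ReflTransGen R a b := by
  induction k generalizing a with
  | zero => exact h ▸ .refl
  | succ k ih =>
    obtain ⟨c, hc, hcb, -⟩ := h
    exact .head hc (ih hcb)

theorem mem_of_reflTransGen {S : Set α} (hS : ∀ a b, a ∈ S → R a b → b ∈ S) (ha : a ∈ S)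
    (h : ReflTransGen R a b) : b ∈ S := by
  induction h with
  | refl => exact ha
  | tail _ h ih => exact hS _ _ ih h

theorem eq_or_reflTransGen_of_forall_eq {c d : α}
    (hc : ∀ c', R a c' → ReflTransGen R c' b → c' = c)
    (had : ReflTransGen R a d) (hdb : ReflTransGen R d b) : a = d ∨ ReflTransGen R c d := by
  rcases had.cases_head with rfl | ⟨c', hc', hcd⟩
  · exact .inl rfl
  · exact .inr (hc c' hc' (hcd.trans hdb) ▸ hcd)

theorem UniquePath.total (h : UniquePath R k a b) {c d : α}
    (hac : ReflTransGen R a c) (hcb : ReflTransGen R c b)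
    (had : ReflTransGen R a d) (hdb : ReflTransGen R d b) :
    ReflTransGen R c d ∨ ReflTransGen R d c := by
  induction k generalizing a with
  | zero => exact .inl (hcb.trans (h ▸ had))
  | succ k ih =>
    obtain ⟨e, -, heb, he⟩ := h
    rcases eq_or_reflTransGen_of_forall_eq he hac hcb with rfl | hec
    · exact .inl had
    rcases eq_or_reflTransGen_of_forall_eq he had hdb with rfl | hed
    · exact .inr hac
    exact ih heb hec hed

variable {R' : β → β → Prop} {S : Set α} {φ : α → β}

theorem exists_reflTransGen_of_map (hS : ∀ a b, a ∈ S → R a b → b ∈ S)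
    (hlift : ∀ a c, a ∈ S → R' (φ a) c → ∃ b, R a b ∧ φ b = c) (ha : a ∈ S) {c : β}
    (h : ReflTransGen R' (φ a) c) : ∃ b, ReflTransGen R a b ∧ φ b = c := by
  induction h with
  | refl => exact ⟨a, .refl, rfl⟩
  | tail _ h ih =>
    obtain ⟨b, hab, rfl⟩ := ih
    obtain ⟨b', hb', rfl⟩ := hlift b _ (mem_of_reflTransGen hS ha hab) h
    exact ⟨b', .tail hab hb', rfl⟩

theorem reflTransGen_map_iff (hφ : Set.InjOn φ S) (hS : ∀ a b, a ∈ S → R a b → b ∈ S)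
    (hmap : ∀ a b, a ∈ S → R a b → R' (φ a) (φ b))
    (hlift : ∀ a c, a ∈ S → R' (φ a) c → ∃ b, R a b ∧ φ b = c) (ha : a ∈ S) (hb : b ∈ S) :
    ReflTransGen R' (φ a) (φ b) ↔ ReflTransGen R a b := by
  constructor
  · intro h
    obtain ⟨b', hab, hb'⟩ := exists_reflTransGen_of_map hS hlift ha h
    exact hφ (mem_of_reflTransGen hS ha hab) hb hb' ▸ hab
  · intro h
    induction h using ReflTransGen.head_induction_on with
    | refl => exact .refl
    | head h _ ih => exact .head (hmap _ _ ha h) (ih (hS _ _ ha h))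

theorem uniquePath_map_iff (hφ : Set.InjOn φ S) (hS : ∀ a b, a ∈ S → R a b → b ∈ S)
    (hmap : ∀ a b, a ∈ S → R a b → R' (φ a) (φ b))
    (hlift : ∀ a c, a ∈ S → R' (φ a) c → ∃ b, R a b ∧ φ b = c) (ha : a ∈ S) (hb : b ∈ S) :
    UniquePath R' k (φ a) (φ b) ↔ UniquePath R k a b := by
  have hle {c : α} (hc : c ∈ S) := reflTransGen_map_iff hφ hS hmap hlift hc hb
  induction k generalizing a with
  | zero => exact hφ.eq_iff ha hb
  | succ k ih =>
    constructor
    · rintro ⟨x, hx, hxb, hu⟩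
      obtain ⟨c, hac, rfl⟩ := hlift a x ha hx
      have hc := hS _ _ ha hac
      refine ⟨c, hac, (ih hc).1 hxb, fun c' hac' hc'b => ?_⟩
      have hc' := hS _ _ ha hac'
      exact hφ hc' hc (hu _ (hmap _ _ ha hac') ((hle hc').2 hc'b))
    · rintro ⟨c, hac, hcb, hu⟩
      refine ⟨φ c, hmap _ _ ha hac, (ih (hS _ _ ha hac)).2 hcb, fun x hx hxb => ?_⟩
      obtain ⟨c', hac', rfl⟩ := hlift a x ha hx
      rw [hu c' hac' ((hle (hS _ _ ha hac')).1 hxb)]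

end UniquePath

section Intervals

variable {S : Set (List Bool)} {r R : List Bool → List Bool → Prop} {P Q : List Bool} {k : ℕ}

theorem hasChainIn_zero : HasChainIn S r P Q 0 ↔ P = Q ∧ P ∈ S := by
  constructor
  · rintro ⟨c, rfl, h, hS, -⟩
    exact ⟨h, hS 0 le_rfl⟩
  · rintro ⟨rfl, h⟩
    exact ⟨fun _ => P, rfl, rfl, fun _ _ => h, fun i hi => absurd hi (Nat.not_lt_zero i)⟩

theorem hasChainIn_succ :
    HasChainIn S r P Q (k + 1) ↔ P ∈ S ∧ ∃ T, ltOf r P T ∧ HasChainIn S r T Q k := by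
  constructor
  · rintro ⟨c, rfl, rfl, hS, hlt⟩
    exact ⟨hS 0 (by lia), c 1, hlt 0 (by lia), fun i => c (i + 1), rfl, rfl,
      fun i hi => hS _ (by lia), fun i hi => hlt _ (by lia)⟩
  · rintro ⟨hP, T, hT, c, rfl, rfl, hS, hlt⟩
    refine ⟨fun i => Nat.casesOn i P c, rfl, rfl, ?_, ?_⟩
    · rintro (_ | i) hi
      exacts [hP, hS i (by lia)]
    · rintro (_ | i) hi
      exacts [hT, hlt i (by lia)]

theorem _root_.HasChainIn.le (h : HasChainIn S (ReflTransGen R) P Q k) : ReflTransGen R P Q := by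
  induction k generalizing P with
  | zero => exact (hasChainIn_zero.1 h).1 ▸ .refl
  | succ k ih =>
    obtain ⟨-, T, hT, h⟩ := hasChainIn_succ.1 h
    exact hT.1.trans (ih h)

theorem UniquePath.length_le {T : List Bool} {m : ℕ} (h : UniquePath R k P Q)
    (hPT : ReflTransGen R P T) (hm : HasChainIn S (ReflTransGen R) T Q m) : m ≤ k := by
  induction k generalizing P T m with
  | zero =>
    obtain rfl : P = Q := h
    cases m with
    | zero => exact le_rfl
    | succ m =>
      obtain ⟨-, T', hT', hm⟩ := hasChainIn_succ.1 hm
      exact (hT'.2 (hm.le.trans hPT)).elim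
  | succ k ih =>
    obtain ⟨c, -, hcQ, hu⟩ := h
    rcases eq_or_reflTransGen_of_forall_eq hu hPT hm.le with rfl | hcT
    · cases m with
      | zero => lia
      | succ m =>
        obtain ⟨-, T', hT', hm⟩ := hasChainIn_succ.1 hm
        rcases eq_or_reflTransGen_of_forall_eq hu hT'.1 hm.le with rfl | hcT
        · exact (hT'.2 .refl).elim
        · exact Nat.succ_le_succ (ih hcQ hcT hm)
    · exact (ih hcQ hcT hm).trans k.le_succ

theorem UniquePath.hasChainIn (hS : ∀ P Q, P ∈ S → R P Q → Q ∈ S)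
    (acyclic : ∀ P Q, P ∈ S → R P Q → ¬ ReflTransGen R Q P) (hP : P ∈ S)
    (h : UniquePath R k P Q) :
    HasChainIn S (ReflTransGen R) P Q k := by
  induction k generalizing P with
  | zero => exact hasChainIn_zero.2 ⟨h, hP⟩
  | succ k ih =>
    obtain ⟨c, hc, hcQ, -⟩ := h
    exact hasChainIn_succ.2 ⟨hP, c, ⟨.single hc, acyclic _ _ hP hc⟩, ih (hS _ _ hP hc) hcQ⟩

theorem uniquePath_of_linearInterval (hS : ∀ P Q, P ∈ S → R P Q → Q ∈ S)
    (acyclic : ∀ P Q, P ∈ S → R P Q → ¬ ReflTransGen R Q P)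
    (cov : ∀ P Q Q', P ∈ S → R P Q → R P Q' → ReflTransGen R Q Q' → Q = Q')
    (hlin : LinearInterval S (ReflTransGen R) P Q)
    (hk : IntervalHeight S (ReflTransGen R) P Q k) : UniquePath R k P Q := by
  have lt_of_ne {P Q} (hP : P ∈ S) (h : ReflTransGen R P Q) (hne : P ≠ Q) :
      ltOf (ReflTransGen R) P Q := by
    obtain rfl | ⟨c, hc, hcQ⟩ := h.cases_head
    · exact (hne rfl).elim
    · exact ⟨h, fun hQP => acyclic _ _ hP hc (hcQ.trans hQP)⟩
  obtain ⟨hP, hQ, hle, htot⟩ := hlin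
  obtain ⟨hch, hmax⟩ := hk
  induction k generalizing P with
  | zero =>
    by_contra hne
    have := hmax 1 (hasChainIn_succ.2 ⟨hP, Q, lt_of_ne hP hle hne, hasChainIn_zero.2 ⟨rfl, hQ⟩⟩)
    lia
  | succ k ih =>
    obtain ⟨-, T, hPT, hTQ⟩ := hasChainIn_succ.1 hch
    rcases hPT.1.cases_head with rfl | ⟨c, hc, hcT⟩
    · exact (hPT.2 .refl).elim
    have hcS := hS _ _ hP hc
    have hPc : ltOf (ReflTransGen R) P c := ⟨.single hc, acyclic _ _ hP hc⟩
    obtain rfl : c = T := by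
      by_contra hne
      have := hmax (k + 2) (hasChainIn_succ.2 ⟨hP, c, hPc, hasChainIn_succ.2 ⟨hcS, T,
        lt_of_ne hcS hcT hne, hTQ⟩⟩)
      lia
    refine ⟨c, hc, ih hcS hTQ.le ?_ hTQ fun m hm => ?_, fun c' hc' hc'Q => ?_⟩
    · intro T T' hT hT' h1 h2 h1' h2'
      exact htot T T' hT hT' (.head hc h1) h2 (.head hc h1') h2'
    · exact Nat.le_of_succ_le_succ (hmax (m + 1) (hasChainIn_succ.2 ⟨hP, c, hPc, hm⟩))
    · rcases htot c c' hcS (hS _ _ hP hc') (.single hc) hTQ.le (.single hc') hc'Q with h | h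
      · exact (cov _ _ _ hP hc hc' h).symm
      · exact cov _ _ _ hP hc' hc h

theorem linearInterval_and_intervalHeight_iff (hS : ∀ P Q, P ∈ S → R P Q → Q ∈ S)
    (acyclic : ∀ P Q, P ∈ S → R P Q → ¬ ReflTransGen R Q P)
    (cov : ∀ P Q Q', P ∈ S → R P Q → R P Q' → ReflTransGen R Q Q' → Q = Q') :
    LinearInterval S (ReflTransGen R) P Q ∧ IntervalHeight S (ReflTransGen R) P Q k ↔
      P ∈ S ∧ UniquePath R k P Q :=
  ⟨fun h => ⟨h.1.1, uniquePath_of_linearInterval hS acyclic cov h.1 h.2⟩,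
    fun ⟨hP, h⟩ => ⟨⟨hP, mem_of_reflTransGen hS hP h.le, h.le,
      fun _ _ _ _ h1 h2 h1' h2' => h.total h1 h2 h1' h2'⟩,
      h.hasChainIn hS acyclic hP, fun _ hm => h.length_le .refl hm⟩⟩

end Intervals

/-! ### Rotations of altitude functions -/

section Altitudes

variable {n k : ℕ} {δ : ℕ → ℤ} {f g g' : ℕ → ℤ} {i j l i' j' m : ℕ}

/-- `f` raised by `k` on the index range `[i, j)`. -/
def raise (f : ℕ → ℤ) (i j : ℕ) (k : ℤ) : ℕ → ℤ :=
  fun m => if i ≤ m ∧ m < j then f m + k else f m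

theorem raise_apply (f : ℕ → ℤ) (i j : ℕ) (k : ℤ) (m : ℕ) :
    raise f i j k m = if i ≤ m ∧ m < j then f m + k else f m := rfl

theorem raise_index_unique {k k' : ℤ} (hij : i < j) (hij' : i' < j') (hk : k ≠ 0) (hk' : k' ≠ 0)
    (h : raise f i j k = raise f i' j' k') : i = i' := by
  have hi := congrFun h i
  have hi' := congrFun h i'
  grind [raise_apply]

theorem raise_zero (f : ℕ → ℤ) (i j : ℕ) : raise f i j 0 = f := by
  funext m
  simp [raise_apply]

theorem raise_raise (f : ℕ → ℤ) (i j : ℕ) (k l : ℤ) :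
    raise (raise f i j k) i j l = raise f i j (k + l) := by
  funext m
  grind [raise_apply]

theorem raise_comm (f : ℕ → ℤ) (i j i' j' : ℕ) (k l : ℤ) :
    raise (raise f i j k) i' j' l = raise (raise f i' j' l) i j k := by
  funext m
  grind [raise_apply]

theorem raise_append (f : ℕ → ℤ) (hij : i ≤ j) (hjl : j ≤ l) (k : ℤ) :
    raise (raise f i j k) j l k = raise f i l k := by
  funext m
  grind [raise_apply]

/-- When `f m` is the altitude at which the up step of index `m` starts (indices start at `0`, so
that this step contributes `δ (m + 1)`), `gap δ f i` is the number of down steps immediately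
before the up step of index `i`. Its value at `0` is a convention: it makes the first up step,
which is in no valley, fail the condition `0 < gap δ f i`. -/
def gap (δ f : ℕ → ℤ) : ℕ → ℤ
  | 0 => 0
  | i + 1 => f i + δ (i + 1) - f (i + 1)

theorem gap_raise (hi : 0 < i) (hij : i < j) (k : ℤ) (m : ℕ) :
    gap δ (raise f i j k) m = gap δ f m + (if m = j then k else 0) - (if m = i then k else 0) := by
  cases m with
  | zero => grind [gap]
  | succ m => grind [gap, raise_apply]

theorem pos_of_gap_pos (h : 0 < gap δ f i) : 0 < i := by
  cases i with
  | zero => exact h.false.elim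
  | succ i => exact i.succ_pos

/-- The up steps of the excursion of the up step of index `i` are those of index in `[i, j)`. -/
structure IsBlock (n : ℕ) (f : ℕ → ℤ) (i j : ℕ) : Prop where
  lt : i < j
  le_size : j ≤ n
  lt_apply : ∀ m, i < m → m < j → f i < f m
  apply_le : f j ≤ f i

/-- The `k ≥ 1` consecutive excursions which start with that of the up step of index `i` have as
up steps those of index in `[i, j)`. -/
inductive IsChain (n : ℕ) (f : ℕ → ℤ) : ℕ → ℕ → ℕ → Prop
  | single {i j : ℕ} : IsBlock n f i j → IsChain n f 1 i j
  | cons {k i l j : ℕ} : IsBlock n f i l → f l = f i → IsChain n f k l j → IsChain n f (k + 1) i j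

/-- The rotation at the up step of index `i`, whose excursion has up steps `[i, j)`. -/
def RotAt (n : ℕ) (δ : ℕ → ℤ) (i j : ℕ) (f g : ℕ → ℤ) : Prop :=
  0 < gap δ f i ∧ IsBlock n f i j ∧ g = raise f i j 1

/-- The counterpart of `DeltaRot` on altitude functions. -/
def Rot (n : ℕ) (δ f g : ℕ → ℤ) : Prop := ∃ i j, RotAt n δ i j f g

/-- `g` arises from `f` by moving the excursion of the up step of index `i` before the `k` down
steps that precede it. -/
def LeftMove (n : ℕ) (δ : ℕ → ℤ) (k i : ℕ) (f g : ℕ → ℤ) : Prop :=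
  k ≤ gap δ f i ∧ ∃ j, IsBlock n f i j ∧ g = raise f i j k

/-- `g` arises from `f` by moving `k` consecutive excursions, the first one being that of the up
step of index `i`, before the down step that precedes them. -/
def RightMove (n : ℕ) (δ : ℕ → ℤ) (k i : ℕ) (f g : ℕ → ℤ) : Prop :=
  0 < gap δ f i ∧ ∃ j, IsChain n f k i j ∧ g = raise f i j 1

/-- One can go from `f` up to `g` by rotations the first of which is at the up step of index `i`. -/
def StartsAt (n : ℕ) (δ : ℕ → ℤ) (i : ℕ) (f g : ℕ → ℤ) : Prop :=
  ∃ j e, RotAt n δ i j f e ∧ ReflTransGen (Rot n δ) e g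

theorem IsBlock.unique (h : IsBlock n f i j) (h' : IsBlock n f i j') : j = j' := by
  obtain ⟨h1, -, h2, h3⟩ := h
  obtain ⟨h1', -, h2', h3'⟩ := h'
  rcases lt_trichotomy j j' with hjj | hjj | hjj
  · exact ((h2' j h1 hjj).not_ge h3).elim
  · exact hjj
  · exact ((h2 j' h1' hjj).not_ge h3').elim

theorem IsBlock.raise_self (h : IsBlock n f i j) : IsBlock n (raise f i j k) i j := by
  obtain ⟨h1, h2, h3, h4⟩ := h
  constructor <;> grind [raise_apply]

theorem IsBlock.congr (h : IsBlock n f i j) (hfg : ∀ m, i ≤ m → g m = f m) :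
    IsBlock n g i j := by
  obtain ⟨h1, h2, h3, h4⟩ := h
  constructor <;> grind

theorem IsChain.add_le (h : IsChain n f k i j) : i + k ≤ j := by
  induction h with
  | single h => exact h.lt
  | cons h _ _ ih => have := h.lt; lia

theorem IsChain.lt (h : IsChain n f k i j) : i < j := by
  cases h with
  | single h => exact h.lt
  | cons h _ h' => exact h.lt.trans_le ((Nat.le_add_right _ _).trans h'.add_le)

theorem IsChain.le_size (h : IsChain n f k i j) : j ≤ n := by
  induction h with
  | single h => exact h.le_size
  | cons _ _ _ ih => exact ih

theorem IsChain.congr (h : IsChain n f k i j) (hfg : ∀ m, i ≤ m → g m = f m) :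
    IsChain n g k i j := by
  induction h with
  | single h => exact .single (h.congr hfg)
  | cons h he _ ih =>
    have hl := h.lt
    exact .cons (h.congr hfg) (by rw [hfg _ le_rfl, hfg _ hl.le, he])
      (ih fun m hm => hfg m (hl.le.trans hm))

theorem isChain_one_iff : IsChain n f 1 i j ↔ IsBlock n f i j := by
  constructor
  · rintro (h | ⟨-, -, h⟩)
    · exact h
    · exact absurd h nofun
  · exact .single

theorem IsChain.unique (h : IsChain n f k i j) (h' : IsChain n f k i j') : j = j' := by
  induction h generalizing j' with
  | single h => exact h.unique (isChain_one_iff.1 h')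
  | cons h _ hC ih =>
    cases h' with
    | single => exact absurd hC nofun
    | cons h' _ hC' => exact ih (h.unique h' ▸ hC')

theorem IsChain.exists_lt (h : IsChain n f k i j) (him : i < m) (hmj : m < j) :
    ∃ p, i ≤ p ∧ p < m ∧ f p ≤ f m ∧ ∀ q, p < q → q < m → f p < f q := by
  induction h with
  | @single i j h =>
    exact ⟨i, le_rfl, him, (h.lt_apply m him hmj).le,
      fun q hq hqm => h.lt_apply q hq (hqm.trans hmj)⟩
  | @cons k i l j h he hC ih =>
    rcases lt_trichotomy m l with hm | rfl | hm
    · exact ⟨i, le_rfl, him, (h.lt_apply m him hm).le,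
        fun q hq hqm => h.lt_apply q hq (hqm.trans hm)⟩
    · exact ⟨i, le_rfl, him, he.ge, h.lt_apply⟩
    · obtain ⟨p, hp, hp'⟩ := ih hm hmj
      exact ⟨p, h.lt.le.trans hp, hp'⟩

theorem RotAt.unique (h : RotAt n δ i j f g) (h' : RotAt n δ i j' f g') : g = g' := by
  obtain ⟨-, hB, rfl⟩ := h
  obtain ⟨-, hB', rfl⟩ := h'
  rw [hB.unique hB']

theorem RotAt.index_unique (h : RotAt n δ i j f g) (h' : RotAt n δ i' j' f g) : i = i' :=
  raise_index_unique h.2.1.lt h'.2.1.lt one_ne_zero one_ne_zero (h.2.2.symm.trans h'.2.2)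

theorem Rot.apply_le (h : Rot n δ f g) (m : ℕ) : f m ≤ g m := by
  obtain ⟨i, j, -, -, rfl⟩ := h
  grind [raise_apply]

theorem apply_le_of_reflTransGen (h : ReflTransGen (Rot n δ) f g) (m : ℕ) : f m ≤ g m := by
  induction h with
  | refl => exact le_rfl
  | tail _ h ih => exact ih.trans (h.apply_le m)

theorem Rot.not_reflTransGen (h : Rot n δ f g) : ¬ ReflTransGen (Rot n δ) g f := by
  obtain ⟨i, j, -, hB, rfl⟩ := h
  intro h
  have := apply_le_of_reflTransGen h i
  grind [raise_apply, hB.lt]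

theorem Rot.gap_nonneg (h : Rot n δ f g) (hgap : ∀ i, 0 ≤ gap δ f i) (m : ℕ) : 0 ≤ gap δ g m := by
  obtain ⟨i, j, hi, hB, rfl⟩ := h
  have := hgap m
  grind [gap_raise (pos_of_gap_pos hi) hB.lt]

theorem sub_le_sub_of_reflTransGen (h : ReflTransGen (Rot n δ) f g)
    (hf : ∀ m, i < m → m < j → f i < f m) (him : i < m) (hmj : m < j) :
    g i - f i ≤ g m - f m := by
  induction h using ReflTransGen.head_induction_on with
  | refl => simp
  | @head f c hfc _ ih =>
    obtain ⟨i', j', -, hB, rfl⟩ := hfc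
    have hblock : ∀ m, i < m → m < j → i' ≤ i → i < j' → m < j' := by
      intro m hm hmj hi hij
      by_contra! hcon
      have hlt := hf j' hij (hcon.trans_lt hmj)
      rcases hi.eq_or_lt with rfl | hi
      · exact hlt.not_ge hB.apply_le
      · exact (hlt.trans_le hB.apply_le).not_gt (hB.lt_apply i hi hij)
    have := ih fun m hm hmj => by grind [raise_apply, hblock m hm hmj, hf m hm hmj]
    grind [raise_apply, hblock m him hmj]

/-- A rotation at a later index of the chain would break `sub_le_sub_of_reflTransGen`. -/
theorem RotAt.index_eq_of_reflTransGen {r : ℤ} (h : RotAt n δ i' j' f g)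
    (hC : IsChain n f k i j) (hle : ReflTransGen (Rot n δ) g (raise f i j r)) : i' = i := by
  obtain ⟨-, hB, rfl⟩ := h
  have hlt := hB.lt
  have hi' := apply_le_of_reflTransGen hle i'
  have hmem : i ≤ i' ∧ i' < j := by grind [raise_apply]
  by_contra hne
  obtain ⟨p, hip, hpi', hp, hpq⟩ := hC.exists_lt (by lia) hmem.2
  have := sub_le_sub_of_reflTransGen (i := p) (j := i' + 1) (m := i') hle
    (fun m hm hm' => by grind [raise_apply, hpq m hm]) hpi' (by lia)
  grind [raise_apply]

theorem leftMove_one_iff : LeftMove n δ 1 i f g ↔ ∃ j, RotAt n δ i j f g := by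
  simp only [LeftMove, RotAt, Nat.cast_one, exists_and_left]
  rfl

theorem rightMove_one_iff : RightMove n δ 1 i f g ↔ ∃ j, RotAt n δ i j f g := by
  simp only [RightMove, RotAt, isChain_one_iff, exists_and_left]

theorem leftMove_succ_iff :
    LeftMove n δ (k + 1) i f g ↔ ∃ j g', RotAt n δ i j f g' ∧ LeftMove n δ k i g' g := by
  constructor
  · rintro ⟨hk, j, hB, rfl⟩
    have hi : 0 < gap δ f i := by lia
    refine ⟨j, _, ⟨hi, hB, rfl⟩, ?_, j, hB.raise_self (k := 1), ?_⟩
    · grind [gap_raise (pos_of_gap_pos hi) hB.lt, hB.lt]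
    · rw [raise_raise, Nat.cast_succ, add_comm]
  · rintro ⟨j, g', ⟨hi, hB, rfl⟩, hk, j', hB', rfl⟩
    obtain rfl := (hB.raise_self (k := 1)).unique hB'
    refine ⟨?_, j, hB, ?_⟩
    · grind [gap_raise (pos_of_gap_pos hi) hB.lt, hB.lt]
    · rw [raise_raise, Nat.cast_succ, add_comm]

theorem RightMove.cons (h : RotAt n δ i j f g') (he : f j = f i) (h' : RightMove n δ k j g' g) :
    RightMove n δ (k + 1) i f g := by
  obtain ⟨hi, hB, rfl⟩ := h
  obtain ⟨-, l, hC, rfl⟩ := h'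
  refine ⟨hi, l, .cons hB he (hC.congr fun m hm => ?_), raise_append f hB.lt.le hC.lt.le 1⟩
  grind [raise_apply]

theorem RightMove.exists_cons (hgap : ∀ i, 0 ≤ gap δ f i) (h : RightMove n δ (k + 2) i f g) :
    ∃ j g', RotAt n δ i j f g' ∧ f j = f i ∧ RightMove n δ (k + 1) j g' g := by
  obtain ⟨hi, l, _ | ⟨hB, he, hC⟩, rfl⟩ := h
  rename_i j
  have hij := hB.lt
  refine ⟨j, _, ⟨hi, hB, rfl⟩, he, ?_, l, hC.congr fun m hm => ?_,
    (raise_append f hij.le hC.lt.le 1).symm⟩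
  · have := hgap j
    grind [gap_raise (pos_of_gap_pos hi) hij]
  · grind [raise_apply]

theorem LeftMove.uniquePath (h : LeftMove n δ k i f g) : UniquePath (Rot n δ) k f g := by
  induction k generalizing f with
  | zero =>
    obtain ⟨-, j, -, rfl⟩ := h
    exact (raise_zero f i j).symm
  | succ k ih =>
    obtain ⟨j, g', hrot, hleft⟩ := leftMove_succ_iff.1 h
    obtain ⟨-, l, hB, rfl⟩ := h
    refine ⟨g', ⟨i, j, hrot⟩, ih hleft, ?_⟩
    rintro c ⟨i', j', hc⟩ hle
    obtain rfl := hc.index_eq_of_reflTransGen (.single hB) hle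
    exact hc.unique hrot

theorem RightMove.uniquePath (hgap : ∀ i, 0 ≤ gap δ f i) (h : RightMove n δ (k + 1) i f g) :
    UniquePath (Rot n δ) (k + 1) f g := by
  induction k generalizing f i with
  | zero => exact (leftMove_one_iff.2 (rightMove_one_iff.1 h)).uniquePath
  | succ k ih =>
    obtain ⟨j, g', hrot, -, hright⟩ := h.exists_cons hgap
    obtain ⟨-, l, hC, rfl⟩ := h
    refine ⟨g', ⟨i, j, hrot⟩, ih (Rot.gap_nonneg ⟨i, j, hrot⟩ hgap) hright, ?_⟩
    rintro c ⟨i', j', hc⟩ hle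
    obtain rfl := hc.index_eq_of_reflTransGen hC hle
    exact hc.unique hrot

theorem LeftMove.startsAt (h : LeftMove n δ (k + 1) i f g) : StartsAt n δ i f g := by
  obtain ⟨j, e, he, h'⟩ := leftMove_succ_iff.1 h
  exact ⟨j, e, he, h'.uniquePath.le⟩

theorem RightMove.startsAt (hgap : ∀ i, 0 ≤ gap δ f i) (h : RightMove n δ (k + 1) i f g) :
    StartsAt n δ i f g := by
  cases k with
  | zero => exact (rightMove_one_iff.1 h).imp fun j hj => ⟨g, hj, .refl⟩
  | succ k =>
    obtain ⟨j, g', hrot, -, hright⟩ := h.exists_cons hgap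
    exact ⟨j, g', hrot, (hright.uniquePath (Rot.gap_nonneg ⟨i, j, hrot⟩ hgap)).le⟩

theorem Rot.eq_of_reflTransGen (h : Rot n δ f g) (h' : Rot n δ f g')
    (hle : ReflTransGen (Rot n δ) g g') : g = g' := by
  obtain ⟨i, j, h'⟩ := h'
  obtain ⟨d, -, hd, hu⟩ := (leftMove_one_iff.2 ⟨j, h'⟩).uniquePath
  exact (hu g h hle).trans hd

theorem RotAt.commute (h : RotAt n δ i j f g) (h' : RotAt n δ i' j' g g') (hne : i' ≠ i)
    (hi' : 0 < gap δ f i') (hB' : IsBlock n f i' j') (hB : IsBlock n (raise f i' j' 1) i j) :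
    StartsAt n δ i' f g' := by
  obtain ⟨hi, -, rfl⟩ := h
  obtain ⟨-, -, rfl⟩ := h'
  refine ⟨j', _, ⟨hi', hB', rfl⟩, .single ⟨i, j, ?_, hB, raise_comm ..⟩⟩
  grind [gap_raise (pos_of_gap_pos hi') hB'.lt]

theorem RotAt.exchange_of_le (h : RotAt n δ i j f g) (h' : RotAt n δ i' j' g g') (hji : j' ≤ i) :
    StartsAt n δ i' f g' := by
  have hrot := h
  obtain ⟨hi, hB, rfl⟩ := h
  have hgap := gap_raise (δ := δ) (f := f) (pos_of_gap_pos hi) hB.lt 1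
  obtain ⟨h1, h2, h3, h4⟩ := hB
  obtain ⟨hi', ⟨h1', _, h3', h4'⟩, -⟩ := id h'
  apply hrot.commute h' (by lia) (by grind) <;> constructor <;> grind [raise_apply]

theorem RotAt.exchange_of_lt (h : RotAt n δ i j f g) (h' : RotAt n δ i' j' g g') (hlt : i' < i)
    (hij : i < j') : StartsAt n δ i' f g' := by
  have hrot := h
  obtain ⟨hi, hB, rfl⟩ := h
  have hgap := gap_raise (δ := δ) (f := f) (pos_of_gap_pos hi) hB.lt 1
  obtain ⟨h1, h2, h3, h4⟩ := id hB
  obtain ⟨hi', ⟨h1', h2', h3', h4'⟩, hg'⟩ := id h'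
  have hle : f i' ≤ f i := by grind [raise_apply]
  have hjj : j ≤ j' := by grind [raise_apply]
  rcases hle.eq_or_lt with he | hlt'
  · -- Here the two rotations yield a left move by two down steps once `[i', i)` is rotated first.
    obtain rfl : j' = j := by grind [raise_apply]
    have hrot' : RotAt n δ i' i f (raise f i' i 1) :=
      ⟨by grind, ⟨hlt, by lia, by grind [raise_apply], he.ge⟩, rfl⟩
    have hleft : LeftMove n δ 2 i (raise f i' i 1) (raise (raise f i' i 1) i j' 2) := by
      refine ⟨?_, j', hB.congr (by grind [raise_apply]), rfl⟩
      grind [gap_raise (pos_of_gap_pos hrot'.1) hlt]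
    refine ⟨i, _, hrot', ?_⟩
    rw [hg', raise_comm, ← raise_append f hlt.le hij.le, raise_raise]
    exact hleft.uniquePath.le
  · apply hrot.commute h' hlt.ne (by grind) <;> constructor <;> grind [raise_apply]

theorem RotAt.exchange_of_gt (hδ : ∀ i, 0 ≤ δ i) (h : RotAt n δ i j f g)
    (h' : RotAt n δ i' j' g g') (hlt : i < i') (hadj : ¬ (i' = j ∧ f j = f i)) :
    StartsAt n δ i' f g' := by
  have hrot := h
  obtain ⟨hi, hB, rfl⟩ := h
  have hgap := gap_raise (δ := δ) (f := f) (pos_of_gap_pos hi) hB.lt 1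
  obtain ⟨h1, h2, h3, h4⟩ := hB
  obtain ⟨hi', ⟨h1', h2', h3', h4'⟩, hg'⟩ := id h'
  have hpos : 0 < gap δ f i' := by
    rcases eq_or_ne i' j with rfl | hne
    · obtain ⟨p, rfl⟩ := Nat.exists_eq_succ_of_ne_zero (Nat.ne_zero_of_lt hlt)
      grind [gap, hδ (p + 1), h3 p]
    · grind
  have hjj : i' < j → j' ≤ j := by grind [raise_apply]
  apply hrot.commute h' hlt.ne' hpos <;> constructor <;> grind [raise_apply]

theorem RotAt.exchange (hδ : ∀ i, 0 ≤ δ i) (h : RotAt n δ i j f g) (h' : RotAt n δ i' j' g g')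
    (hne : i' ≠ i) (hadj : ¬ (i' = j ∧ f j = f i)) :
    StartsAt n δ i' f g' := by
  rcases hne.lt_or_gt with hlt | hgt
  · rcases le_or_gt j' i with hji | hij
    · exact h.exchange_of_le h' hji
    · exact h.exchange_of_lt h' hlt hij
  · exact h.exchange_of_gt hδ h' hgt hadj

theorem RotAt.exchange_leftMove (h : RotAt n δ i j f g) (h' : LeftMove n δ (k + 2) j g g')
    (he : f j = f i) : StartsAt n δ j f g' := by
  obtain ⟨hi, hB, rfl⟩ := h
  obtain ⟨hk, l, hB', rfl⟩ := h'
  obtain ⟨h1, h2, h3, h4⟩ := hB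
  replace hB' : IsBlock n f j l := hB'.congr (by grind [raise_apply])
  obtain ⟨h1', h2', h3', h4'⟩ := id hB'
  rw [gap_raise (pos_of_gap_pos hi) h1] at hk
  have hj : RotAt n δ j l f (raise f j l 1) := ⟨by grind, hB', rfl⟩
  have hgap := gap_raise (δ := δ) (f := f) (pos_of_gap_pos hj.1) h1' 1
  have hrot : RotAt n δ i l (raise f j l 1) (raise (raise f j l 1) i l 1) := by
    refine ⟨by grind, ⟨h1.trans h1', h2', ?_, ?_⟩, rfl⟩ <;> grind [raise_apply]
  have hleft : LeftMove n δ k j (raise (raise f j l 1) i l 1)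
      (raise (raise f i j 1) j l ((k + 2 : ℕ) : ℤ)) := by
    refine ⟨?_, l, ?_, ?_⟩
    · grind [gap_raise (pos_of_gap_pos hrot.1) (h1.trans h1')]
    · constructor <;> grind [raise_apply]
    · funext m
      grind [raise_apply]
  exact ⟨l, _, hj, .head ⟨i, l, hrot⟩ hleft.uniquePath.le⟩

theorem RotAt.not_rightMove (h : RotAt n δ i j f g) (hgap : ∀ i, 0 ≤ gap δ g i) :
    ¬ RightMove n δ (k + 2) i g g' := by
  intro h'
  obtain ⟨l, e, ⟨-, hB', -⟩, he, -⟩ := h'.exists_cons hgap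
  obtain ⟨-, hB, rfl⟩ := h
  obtain rfl := (hB.raise_self (k := 1)).unique hB'
  have hle := hB.apply_le
  have hlt := hB.lt
  grind [raise_apply]

theorem RotAt.index_eq_of_startsAt (h : RotAt n δ i j f g)
    (hu : ∀ e, Rot n δ f e → ReflTransGen (Rot n δ) e g' → e = g) (h' : StartsAt n δ i' f g') :
    i' = i := by
  obtain ⟨l, e, he, heg⟩ := h'
  exact (hu e ⟨i', l, he⟩ heg ▸ he).index_unique h

theorem RotAt.adjacent_of_startsAt (hδ : ∀ i, 0 ≤ δ i) (h : RotAt n δ i j f g)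
    (hu : ∀ e, Rot n δ f e → ReflTransGen (Rot n δ) e g' → e = g) (h' : StartsAt n δ i' g g')
    (hne : i' ≠ i) : i' = j ∧ f j = f i := by
  by_contra hadj
  obtain ⟨j', e, he, heg⟩ := h'
  obtain ⟨l, e', he', hee'⟩ := h.exchange hδ he hne hadj
  exact hne (h.index_eq_of_startsAt hu ⟨l, e', he', hee'.trans heg⟩)

theorem UniquePath.leftMove_or_rightMove (hδ : ∀ i, 0 ≤ δ i) (hgap : ∀ i, 0 ≤ gap δ f i)
    (h : UniquePath (Rot n δ) (k + 1) f g) :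
    (∃ i, LeftMove n δ (k + 1) i f g) ∨ ∃ i, RightMove n δ (k + 1) i f g := by
  induction k generalizing f with
  | zero =>
    obtain ⟨c, ⟨i, j, hc⟩, rfl, -⟩ := h
    exact .inl ⟨i, leftMove_one_iff.2 ⟨j, hc⟩⟩
  | succ k ih =>
    obtain ⟨c, ⟨i, j, hc⟩, hcg, hu⟩ := h
    have hgap' := Rot.gap_nonneg ⟨i, j, hc⟩ hgap
    have right {i'} (h : RightMove n δ (k + 1) i' c g) (hne : i' ≠ i) :
        RightMove n δ (k + 2) i f g := by
      obtain ⟨rfl, he⟩ := hc.adjacent_of_startsAt hδ hu (h.startsAt hgap') hne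
      exact .cons hc he h
    rcases ih hgap' hcg with ⟨i', h⟩ | ⟨i', h⟩ <;> by_cases hne : i' = i
    · subst hne
      exact .inl ⟨i', leftMove_succ_iff.2 ⟨j, c, hc, h⟩⟩
    · cases k with
      | zero => exact .inr ⟨i, right (rightMove_one_iff.2 (leftMove_one_iff.1 h)) hne⟩
      | succ k =>
        obtain ⟨rfl, he⟩ := hc.adjacent_of_startsAt hδ hu h.startsAt hne
        exact (hne (hc.index_eq_of_startsAt hu (hc.exchange_leftMove h he))).elim
    · subst hne
      cases k with
      | zero =>
        refine .inl ⟨i', leftMove_succ_iff.2 ⟨j, c, hc, ?_⟩⟩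
        exact leftMove_one_iff.2 (rightMove_one_iff.1 h)
      | succ k => exact (hc.not_rightMove hgap' h).elim
    · exact .inr ⟨i, right h hne⟩

end Altitudes

/-! ### Words -/

section Words

variable {δ : ℕ → ℤ} {n i k m s : ℕ} {c g g' : ℤ} {u v w u' v' : List Bool}

theorem _root_.IsIncFun.nonneg (hδ : IsIncFun δ) (i : ℕ) : 0 ≤ δ i := by
  rcases hδ i with h | h <;> lia

theorem _root_.IsIncFun.le_one (hδ : IsIncFun δ) (i : ℕ) : δ i ≤ 1 := by
  rcases hδ i with h | h <;> lia

/-- The height at which a word read from height `0` ends. -/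
def height (w : List Bool) : ℤ := w.count true - w.count false

theorem height_nil : height [] = 0 := rfl

theorem height_cons_true (w : List Bool) : height (true :: w) = height w + 1 := by
  simp [height]
  ring

theorem height_cons_false (w : List Bool) : height (false :: w) = height w - 1 := by
  simp [height]
  ring

theorem height_append (v w : List Bool) : height (v ++ w) = height v + height w := by
  simp [height]
  ring

/-- The word `w`, read from height `g`, stays at nonnegative height. -/
def NonnegFrom (g : ℤ) (w : List Bool) : Prop := ∀ p, p <+: w → 0 ≤ g + height p

theorem nonnegFrom_nil : NonnegFrom g [] ↔ 0 ≤ g := by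
  simp [NonnegFrom, height_nil]

theorem nonnegFrom_cons {x : Bool} :
    NonnegFrom g (x :: w) ↔ 0 ≤ g ∧ ∀ p, p <+: w → 0 ≤ g + height (x :: p) := by
  simp only [NonnegFrom, List.prefix_cons_iff]
  constructor
  · intro h
    exact ⟨by simpa [height_nil] using h [] (.inl rfl), fun p hp => h _ (.inr ⟨p, rfl, hp⟩)⟩
  · rintro ⟨h0, h⟩ _ (rfl | ⟨p, rfl, hp⟩)
    · simpa [height_nil] using h0
    · exact h p hp

theorem nonnegFrom_cons_true : NonnegFrom g (true :: w) ↔ 0 ≤ g ∧ NonnegFrom (g + 1) w := by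
  rw [nonnegFrom_cons]
  simp only [height_cons_true, NonnegFrom, add_right_comm g 1, add_assoc]

theorem nonnegFrom_cons_false : NonnegFrom g (false :: w) ↔ 0 ≤ g ∧ NonnegFrom (g - 1) w := by
  rw [nonnegFrom_cons]
  simp only [height_cons_false, NonnegFrom, sub_add_eq_add_sub, add_sub_assoc]

theorem NonnegFrom.mono (h : NonnegFrom g w) (hg : g ≤ g') : NonnegFrom g' w :=
  fun p hp => (h p hp).trans (add_le_add_left hg _)

theorem NonnegFrom.nonneg (h : NonnegFrom g w) : 0 ≤ g := by
  simpa [height_nil] using h [] List.nil_prefix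

theorem NonnegFrom.add_height_nonneg (h : NonnegFrom g w) : 0 ≤ g + height w :=
  h w List.prefix_rfl

theorem nonnegFrom_append :
    NonnegFrom g (v ++ w) ↔ NonnegFrom g v ∧ NonnegFrom (g + height v) w := by
  induction v generalizing g with
  | nil =>
    simp only [List.nil_append, height_nil, add_zero, nonnegFrom_nil]
    exact ⟨fun h => ⟨h.nonneg, h⟩, And.right⟩
  | cons x v ih =>
    cases x
    · rw [List.cons_append, nonnegFrom_cons_false, nonnegFrom_cons_false, ih, height_cons_false,
        and_assoc, sub_add_eq_add_sub, add_sub_assoc]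
    · rw [List.cons_append, nonnegFrom_cons_true, nonnegFrom_cons_true, ih, height_cons_true,
        and_assoc, add_right_comm, add_assoc]

theorem nonnegFrom_replicate_false : NonnegFrom g (List.replicate k false) ↔ k ≤ g := by
  induction k generalizing g with
  | zero => simp [nonnegFrom_nil]
  | succ k ih =>
    rw [List.replicate_succ, nonnegFrom_cons_false, ih]
    lia

theorem nonnegFrom_replicate_true_append (hg : 0 ≤ g) :
    NonnegFrom g (List.replicate k true ++ w) ↔ NonnegFrom (g + k) w := by
  induction k generalizing g with
  | zero => simp
  | succ k ih =>
    rw [List.replicate_succ, List.cons_append, nonnegFrom_cons_true, ih (by lia), and_iff_right hg,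
      Nat.cast_succ, add_right_comm, add_assoc]

theorem isDyckWord_iff :
    IsDyckWord n w ↔ w.count true = n ∧ w.count false = n ∧ NonnegFrom 0 w := by
  simp [IsDyckWord, NonnegFrom, height]

/-- The number of down steps before the up step of index `m` (indices start at `0`); the number
of all down steps if there is no such up step. -/
def downsBefore : List Bool → ℕ → ℕ
  | [], _ => 0
  | false :: w, m => downsBefore w m + 1
  | true :: _, 0 => 0
  | true :: w, m + 1 => downsBefore w m

theorem downsBefore_of_le (h : w.count true ≤ m) : downsBefore w m = w.count false := by
  induction w generalizing m with
  | nil => rfl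
  | cons x w ih =>
    cases x
    · simp [downsBefore, ih (m := m) (by simpa using h)]
    · cases m with
      | zero => simp at h
      | succ m => simp [downsBefore, ih (m := m) (by simpa using h)]

theorem downsBefore_append_of_lt (h : m < v.count true) :
    downsBefore (v ++ w) m = downsBefore v m := by
  induction v generalizing m with
  | nil => simp at h
  | cons x v ih =>
    cases x
    · simp [downsBefore, ih (m := m) (by simpa using h)]
    · cases m with
      | zero => rfl
      | succ m => exact ih (by simpa using h)

theorem downsBefore_append_add :
    downsBefore (v ++ w) (v.count true + m) = v.count false + downsBefore w m := by
  induction v with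
  | nil => simp
  | cons x v ih =>
    cases x
    · simp [downsBefore, ih, add_right_comm]
    · simpa [add_right_comm, downsBefore] using ih

theorem downsBefore_append_of_le (h : v.count true ≤ m) :
    downsBefore (v ++ w) m = v.count false + downsBefore w (m - v.count true) := by
  rw [← downsBefore_append_add, Nat.add_sub_cancel' h]

theorem downsBefore_split (v u : List Bool) :
    downsBefore (v ++ true :: u) (v.count true) = v.count false :=
  downsBefore_append_add (m := 0)

theorem downsBefore_monotone (w : List Bool) : Monotone (downsBefore w) :=
  monotone_nat_of_le_succ fun m => by
    induction w generalizing m with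
    | nil => exact le_rfl
    | cons x w ih =>
      cases x
      · exact Nat.succ_le_succ (ih m)
      · cases m with
        | zero => exact Nat.zero_le _
        | succ m => exact ih m

theorem downsBefore_le_count_false (w : List Bool) (m : ℕ) : downsBefore w m ≤ w.count false := by
  rw [← downsBefore_of_le (le_max_right m (w.count true))]
  exact downsBefore_monotone w (le_max_left _ _)

theorem eq_of_downsBefore_eq (h1 : v.count true = w.count true)
    (h : downsBefore v = downsBefore w) : v = w := by
  have h2 : v.count false = w.count false := by
    rw [← downsBefore_of_le le_rfl, h, downsBefore_of_le h1.ge]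
  induction v generalizing w with
  | nil =>
    cases w with
    | nil => rfl
    | cons x w => cases x <;> simp at h1 h2
  | cons x v ih =>
    cases w with
    | nil => cases x <;> simp at h1 h2
    | cons y w =>
      cases x <;> cases y
      · rw [ih (by simpa using h1) (funext fun m => Nat.succ.inj (congrFun h m))
          (by simpa using h2)]
      · exact absurd (congrFun h 0) (Nat.succ_ne_zero _)
      · exact absurd (congrFun h 0).symm (Nat.succ_ne_zero _)
      · rw [ih (by simpa using h1) (funext fun m => congrFun h (m + 1)) (by simpa using h2)]

theorem exists_eq_append_true_cons (h : i < w.count true) :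
    ∃ v u, w = v ++ true :: u ∧ v.count true = i := by
  induction w generalizing i with
  | nil => simp at h
  | cons x w ih =>
    cases x
    · obtain ⟨v, u, rfl, hv⟩ := ih (i := i) (by simpa using h)
      exact ⟨false :: v, u, rfl, by simpa using hv⟩
    · cases i with
      | zero => exact ⟨[], w, rfl, rfl⟩
      | succ i =>
        obtain ⟨v, u, rfl, hv⟩ := ih (i := i) (by simpa using h)
        exact ⟨true :: v, u, rfl, by simpa using hv⟩

theorem append_true_cons_inj (h : v ++ true :: u = v' ++ true :: u')
    (hc : v.count true = v'.count true) : v = v' ∧ u = u' := by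
  induction v generalizing v' with
  | nil => rcases v' with _ | ⟨_ | _, v'⟩ <;> simp_all
  | cons x v ih =>
    rcases v' with _ | ⟨y, v'⟩
    · cases x <;> simp_all
    · simp only [List.cons_append, List.cons.injEq] at h
      obtain ⟨rfl, h⟩ := h
      exact (ih h (by cases x <;> simpa using hc)).imp (congrArg _) id

/-- The altitude at which the up step of index `m` of the word `w` starts. -/
def altitude (δ : ℕ → ℤ) (w : List Bool) (m : ℕ) : ℤ :=
  ∑ l ∈ Finset.range m, δ (l + 1) - downsBefore w m

theorem eq_of_altitude_eq (h1 : v.count true = w.count true) (h : altitude δ v = altitude δ w) :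
    v = w :=
  eq_of_downsBefore_eq h1 <| funext fun m => by simpa [altitude] using congrFun h m

theorem altitude_split_succ (v u : List Bool) (δ : ℕ → ℤ) (m : ℕ) :
    altitude δ (v ++ true :: u) (v.count true + (m + 1)) =
      ∑ l ∈ Finset.range (v.count true + m + 1), δ (l + 1) - v.count false - downsBefore u m := by
  rw [altitude, downsBefore_append_add, Nat.cast_add, sub_sub]
  rfl

theorem altitude_split (v u : List Bool) (δ : ℕ → ℤ) :
    altitude δ (v ++ true :: u) (v.count true) =
      ∑ l ∈ Finset.range (v.count true), δ (l + 1) - v.count false := by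
  rw [altitude, downsBefore_split]

theorem gap_altitude_succ (δ : ℕ → ℤ) (w : List Bool) (i : ℕ) :
    gap δ (altitude δ w) (i + 1) = downsBefore w (i + 1) - downsBefore w i := by
  simp only [gap, altitude, Finset.sum_range_succ]
  ring

theorem gap_altitude_nonneg (δ : ℕ → ℤ) (w : List Bool) (i : ℕ) : 0 ≤ gap δ (altitude δ w) i := by
  cases i with
  | zero => exact le_rfl
  | succ i =>
    rw [gap_altitude_succ, sub_nonneg, Nat.cast_le]
    exact downsBefore_monotone w i.le_succ

theorem exists_eq_append_replicate_false (h0 : 0 < v.count true)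
    (h : downsBefore v (v.count true - 1) + k ≤ v.count false) :
    ∃ v', v = v' ++ List.replicate k false := by
  induction k with
  | zero => exact ⟨v, by simp⟩
  | succ k ih =>
    obtain ⟨v', rfl⟩ := ih (by lia)
    rcases List.eq_nil_or_concat' v' with rfl | ⟨v', _ | _, rfl⟩
    · simp at h0
    · exact ⟨v', by simp [List.replicate_succ]⟩
    · simp [List.count_replicate, downsBefore_split] at h

theorem exists_eq_of_le_gap_altitude (hi : i < w.count true) (hi0 : 0 < i)
    (h : k ≤ gap δ (altitude δ w) i) :
    ∃ v u, w = v ++ (List.replicate k false ++ true :: u) ∧ v.count true = i := by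
  obtain ⟨v, u, rfl, rfl⟩ := exists_eq_append_true_cons hi
  obtain ⟨v', rfl⟩ : ∃ v', v = v' ++ List.replicate k false := by
    refine exists_eq_append_replicate_false hi0 ?_
    rw [← Nat.sub_add_cancel hi0, gap_altitude_succ, Nat.sub_add_cancel hi0, downsBefore_split,
      downsBefore_append_of_lt (by lia)] at h
    lia
  exact ⟨v', u, by simp, by simp [List.count_replicate]⟩

theorem le_gap_altitude (h0 : 0 < v.count true) :
    k ≤ gap δ (altitude δ (v ++ (List.replicate k false ++ true :: u))) (v.count true) := by
  obtain ⟨i, hi⟩ := Nat.exists_eq_succ_of_ne_zero h0.ne'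
  have hsplit := downsBefore_split (v ++ List.replicate k false) u
  simp only [List.append_assoc, List.count_append, List.count_replicate_self, beq_iff_eq,
    List.count_replicate, Bool.false_eq_true, if_false, add_zero] at hsplit
  have hle := downsBefore_le_count_false v i
  rw [hi] at hsplit
  rw [hi, gap_altitude_succ, hsplit, downsBefore_append_of_lt (by lia)]
  lia

/-- The word `w`, read from altitude `c` after `s` up steps, stays at positive altitude until
its end, where it has altitude `0`. -/
def FirstPassage (δ : ℕ → ℤ) : ℕ → ℤ → List Bool → Prop
  | _, c, [] => c = 0
  | s, c, true :: w => 0 < c ∧ FirstPassage δ (s + 1) (c + δ (s + 1)) w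
  | s, c, false :: w => 0 < c ∧ FirstPassage δ s (c - 1) w

/-- The δ-excursion of an up step with `s` up steps before it is this step followed by `w`. -/
def IsExcursionTail (δ : ℕ → ℤ) (s : ℕ) (w : List Bool) : Prop :=
  FirstPassage δ (s + 1) (δ (s + 1)) w

theorem FirstPassage.eq_nil_iff (h : FirstPassage δ s c w) : w = [] ↔ c = 0 := by
  rcases w with _ | ⟨_ | _, w⟩
  · exact iff_of_true rfl h
  · exact iff_of_false nofun h.1.ne'
  · exact iff_of_false nofun h.1.ne'

theorem FirstPassage.unique (h : FirstPassage δ s c v) (h' : FirstPassage δ s c v')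
    (e : v ++ u = v' ++ u') : v = v' ∧ u = u' := by
  induction v generalizing s c v' with
  | nil =>
    obtain rfl := h'.eq_nil_iff.2 h
    exact ⟨rfl, e⟩
  | cons x v ih =>
    rcases v' with _ | ⟨y, v'⟩
    · exact absurd (h.eq_nil_iff.2 h') nofun
    · simp only [List.cons_append, List.cons.injEq] at e
      obtain ⟨rfl, e⟩ := e
      cases x <;> exact (ih h.2 h'.2 e).imp (congrArg _) id

theorem exists_firstPassage (hδ : IsIncFun δ) (hc : 0 ≤ c) (h : c + height w ≤ 0) :
    ∃ v u, w = v ++ u ∧ FirstPassage δ s c v := by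
  induction w generalizing s c with
  | nil => exact ⟨[], [], rfl, by rw [height_nil] at h; exact le_antisymm (by lia) hc⟩
  | cons x w ih =>
    rcases hc.eq_or_lt with rfl | hc'
    · exact ⟨[], x :: w, rfl, rfl⟩
    cases x
    · rw [height_cons_false] at h
      obtain ⟨v, u, rfl, hv⟩ := ih (s := s) (c := c - 1) (by lia) (by lia)
      exact ⟨false :: v, u, rfl, hc', hv⟩
    · rw [height_cons_true] at h
      have h0 := hδ.nonneg (s + 1)
      have h1 := hδ.le_one (s + 1)
      obtain ⟨v, u, rfl, hv⟩ := ih (s := s + 1) (c := c + δ (s + 1)) (by lia) (by lia)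
      exact ⟨true :: v, u, rfl, hc', hv⟩

theorem FirstPassage.altitude_end (h : FirstPassage δ s c w) :
    c + ∑ l ∈ Finset.range (s + w.count true), δ (l + 1) =
      ∑ l ∈ Finset.range s, δ (l + 1) + w.count false := by
  induction w generalizing s c with
  | nil => simpa [FirstPassage] using h
  | cons x w ih =>
    cases x
    · have := ih h.2
      simp only [List.count_cons_self, List.count_cons_of_ne Bool.false_ne_true] at this ⊢
      lia
    · have := ih h.2
      rw [Finset.sum_range_succ, add_right_comm s 1] at this
      simp only [List.count_cons_self, List.count_cons_of_ne Bool.false_ne_true.symm, ← add_assoc]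
      lia

theorem FirstPassage.altitude_pos (h : FirstPassage δ s c w) (hm : m < w.count true) :
    ∑ l ∈ Finset.range s, δ (l + 1) + downsBefore w m <
      c + ∑ l ∈ Finset.range (s + m), δ (l + 1) := by
  induction w generalizing s c m with
  | nil => simp at hm
  | cons x w ih =>
    cases x
    · have := ih h.2 (m := m) (by simpa using hm)
      simp only [downsBefore]
      lia
    · cases m with
      | zero => simpa [downsBefore] using h.1
      | succ m =>
        have := ih h.2 (m := m) (by simpa using hm)
        rw [Finset.sum_range_succ, add_right_comm s 1] at this
        simp only [downsBefore, ← add_assoc]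
        lia

theorem FirstPassage.nonneg_add_height (hδ : IsIncFun δ) (h : FirstPassage δ s c w) :
    0 ≤ c + height w := by
  induction w generalizing s c with
  | nil => exact (add_zero c).symm ▸ Eq.ge h
  | cons x w ih =>
    cases x
    · have := ih h.2
      rw [height_cons_false]
      lia
    · have := ih h.2
      have := hδ.le_one (s + 1)
      rw [height_cons_true]
      lia

theorem FirstPassage.nonnegFrom (hδ : IsIncFun δ) (h : FirstPassage δ s c w) (hg : c ≤ g) :
    NonnegFrom g w := by
  induction w generalizing s c g with
  | nil => exact nonnegFrom_nil.2 (hg.trans' (Eq.ge h))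
  | cons x w ih =>
    cases x
    · exact nonnegFrom_cons_false.2 ⟨h.1.le.trans hg, ih h.2 (by lia)⟩
    · have := hδ.le_one (s + 1)
      exact nonnegFrom_cons_true.2 ⟨h.1.le.trans hg, ih h.2 (by lia)⟩

end Words

/-! ### Rotations of words -/

section Bridge

variable {δ : ℕ → ℤ} {n k m s : ℕ} {c : ℤ} {A B P Q T W w : List Bool} {g : ℕ → ℤ}

/-- The δ-elevation of the word `w`, read after `s` up steps. -/
def elevation (δ : ℕ → ℤ) : ℕ → List Bool → ℤ
  | _, [] => 0
  | s, true :: w => δ (s + 1) + elevation δ (s + 1) w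
  | s, false :: w => -1 + elevation δ s w

theorem stepVal_append_cons (δ : ℕ → ℤ) (A w : List Bool) (x : Bool) :
    stepVal δ (A ++ x :: w) A.length = if x then δ (A.count true + 1) else -1 := by
  have htake : (A ++ x :: w).take (A.length + 1) = A ++ [x] := by
    rw [List.take_append]
    simp
  cases x <;> simp [stepVal, htake]

theorem elev_append (δ : ℕ → ℤ) (A : List Bool) (hm : m ≤ w.length) :
    elev δ (A ++ w) A.length (A.length + m) = elevation δ (A.count true) (w.take m) := by
  induction w generalizing A m with
  | nil =>
    obtain rfl : m = 0 := by simpa using hm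
    simp [elev, elevation]
  | cons x w ih =>
    cases m with
    | zero => simp [elev, elevation]
    | succ m =>
      have htail := ih (A ++ [x]) (m := m) (by simpa using hm)
      rw [elev, List.length_append, List.length_singleton, List.append_assoc,
        List.singleton_append, add_assoc, add_comm 1 m] at htail
      rw [elev, Finset.sum_eq_sum_Ico_succ_bot (by lia), stepVal_append_cons, htail]
      cases x <;> simp [elevation]

theorem firstPassage_iff (hδ : ∀ i, 0 ≤ δ i) (hc : 0 ≤ c) :
    FirstPassage δ s c w ↔ c + elevation δ s w = 0 ∧
      ∀ m < w.length, c + elevation δ s (w.take m) ≠ 0 := by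
  induction w generalizing s c with
  | nil => simp [FirstPassage, elevation]
  | cons x w ih =>
    have hx : (∀ m < (x :: w).length, c + elevation δ s ((x :: w).take m) ≠ 0) ↔
        c ≠ 0 ∧ ∀ m < w.length, c + elevation δ s (x :: w.take m) ≠ 0 := by
      rw [List.length_cons, Nat.forall_lt_succ_left']
      simp [elevation]
    rw [hx]
    rcases hc.eq_or_lt with rfl | hpos
    · cases x <;> simp [FirstPassage]
    · cases x
      · simp only [FirstPassage, elevation, ih (show 0 ≤ c - 1 by lia)]
        grind
      · simp only [FirstPassage, elevation, ih (add_nonneg hc (hδ (s + 1)))]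
        grind

theorem isDeltaExcAt_append_iff (hδ : ∀ i, 0 ≤ δ i) (A T C : List Bool) :
    IsDeltaExcAt δ (A ++ T) A.length C ↔
      ∃ W B, T = true :: (W ++ B) ∧ C = true :: W ∧ IsExcursionTail δ (A.count true) W := by
  constructor
  · rintro ⟨hup, m, h0, hm, rfl, hzero, hmin⟩
    obtain ⟨T, rfl⟩ : ∃ T', T = true :: T' := by
      rcases T with _ | ⟨_ | _, T⟩ <;> simp at hup
      simp
    obtain ⟨m, rfl⟩ := Nat.exists_eq_succ_of_ne_zero h0.ne'
    have hm' : m ≤ T.length := by simpa [add_assoc] using hm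
    refine ⟨T.take m, T.drop m, by simp, by simp, (firstPassage_iff hδ (hδ _)).2 ⟨?_, ?_⟩⟩
    · rwa [elev_append _ _ (by simpa using hm')] at hzero
    · intro l hl
      have hlm : l < m := hl.trans_le (List.length_take_le m T)
      have := hmin (l + 1) l.succ_pos (by lia)
      rw [elev_append _ _ (by simpa using hlm.le.trans hm')] at this
      rwa [List.take_take, min_eq_left hlm.le]
  · rintro ⟨W, B, rfl, rfl, h⟩
    obtain ⟨hzero, hmin⟩ := (firstPassage_iff hδ (hδ _)).1 h
    refine ⟨by simp, W.length + 1, by lia, by simp, by simp, ?_, ?_⟩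
    · rw [elev_append _ _ (by simp)]
      simpa [elevation] using hzero
    · rintro (_ | m) h0 hm
      · exact h0.false.elim
      · rw [elev_append _ _ (by simp; lia)]
        have := hmin m (by lia)
        rwa [List.take_succ_cons, List.take_append_of_le_length (by lia)]

theorem deltaRot_iff (hδ : ∀ i, 0 ≤ δ i) :
    DeltaRot δ P Q ↔ ∃ A W B, P = A ++ false :: true :: (W ++ B) ∧
      Q = A ++ true :: (W ++ false :: B) ∧ IsExcursionTail δ (A.count true) W := by
  have hexc (A T C : List Bool) : IsDeltaExcAt δ (A ++ false :: T) (A.length + 1) C ↔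
      ∃ W B, T = true :: (W ++ B) ∧ C = true :: W ∧ IsExcursionTail δ (A.count true) W := by
    simpa using isDeltaExcAt_append_iff hδ (A ++ [false]) T C
  constructor
  · rintro ⟨A, C, B, rfl, rfl, h⟩
    obtain ⟨W, B', h1, rfl, h2⟩ := (hexc A _ _).1 h
    exact ⟨A, W, B, by simp, by simp, h2⟩
  · rintro ⟨A, W, B, rfl, rfl, h⟩
    exact ⟨A, true :: W, B, by simp, by simp, (hexc A _ _).2 ⟨W, B, rfl, rfl, h⟩⟩

theorem IsExcursionTail.altitude_end (h : IsExcursionTail δ (A.count true) W) (B : List Bool) :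
    altitude δ (A ++ true :: (W ++ B)) (A.count true + (W.count true + 1)) =
      altitude δ (A ++ true :: (W ++ B)) (A.count true) - downsBefore B 0 := by
  have hend := FirstPassage.altitude_end h
  rw [Finset.sum_range_succ, add_right_comm (A.count true) 1] at hend
  rw [altitude_split_succ, altitude_split, downsBefore_append_of_le le_rfl, Nat.sub_self]
  lia

theorem IsExcursionTail.isBlock (h : IsExcursionTail δ (A.count true) W)
    (hn : (A ++ true :: (W ++ B)).count true = n) :
    IsBlock n (altitude δ (A ++ true :: (W ++ B))) (A.count true)
      (A.count true + (W.count true + 1)) where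
  lt := by lia
  le_size := by
    simp only [List.count_append, List.count_cons_self] at hn
    lia
  lt_apply m h1 h2 := by
    obtain ⟨m, rfl⟩ := Nat.exists_eq_add_of_lt h1
    have hm : m < W.count true := by lia
    have hpos := FirstPassage.altitude_pos h hm
    rw [Finset.sum_range_succ, add_right_comm (A.count true) 1] at hpos
    rw [altitude_split, add_assoc, altitude_split_succ, downsBefore_append_of_lt hm]
    lia
  apply_le := by
    rw [h.altitude_end]
    lia

theorem altitude_rotation (δ : ℕ → ℤ) (A W B : List Bool) :
    altitude δ (A ++ true :: (W ++ false :: B)) =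
      raise (altitude δ (A ++ false :: true :: (W ++ B))) (A.count true)
        (A.count true + (W.count true + 1)) 1 := by
  funext m
  rw [raise_apply]
  rcases lt_or_ge m (A.count true) with hm | hm
  · rw [if_neg (by lia), altitude, altitude, downsBefore_append_of_lt hm,
      downsBefore_append_of_lt hm]
  · obtain ⟨m, rfl⟩ := Nat.exists_eq_add_of_le hm
    rw [altitude, altitude, downsBefore_append_add, downsBefore_append_add]
    cases m with
    | zero => simp [downsBefore, ← sub_sub]
    | succ m =>
      simp only [downsBefore]
      rcases lt_or_ge m (W.count true) with hm | hm
      · rw [if_pos (by lia), downsBefore_append_of_lt hm, downsBefore_append_of_lt hm]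
        lia
      · rw [if_neg (by lia), downsBefore_append_of_le hm, downsBefore_append_of_le hm]
        simp only [downsBefore]
        lia

theorem _root_.IsDyckWord.count_true_pos (hP : IsDyckWord n (A ++ false :: T)) :
    0 < A.count true := by
  have := (nonnegFrom_cons_false.1 (nonnegFrom_append.1 (isDyckWord_iff.1 hP).2.2).2).2.nonneg
  rw [height] at this
  lia

theorem IsExcursionTail.rotAt (h : IsExcursionTail δ (A.count true) W)
    (hP : IsDyckWord n (A ++ false :: true :: (W ++ B))) :
    RotAt n δ (A.count true) (A.count true + (W.count true + 1))
      (altitude δ (A ++ false :: true :: (W ++ B)))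
      (altitude δ (A ++ true :: (W ++ false :: B))) := by
  refine ⟨?_, ?_, altitude_rotation δ A W B⟩
  · exact Int.lt_iff_add_one_le.2 (le_gap_altitude (k := 1) hP.count_true_pos)
  · have := IsExcursionTail.isBlock (A := A ++ [false]) (W := W) (B := B) (by simpa using h)
      (by simpa using hP.1)
    simpa using this

theorem _root_.DeltaRot.rot_altitude (hδ : ∀ i, 0 ≤ δ i) (hP : IsDyckWord n P)
    (h : DeltaRot δ P Q) : Rot n δ (altitude δ P) (altitude δ Q) := by
  obtain ⟨A, W, B, rfl, rfl, hW⟩ := (deltaRot_iff hδ).1 h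
  exact ⟨_, _, hW.rotAt hP⟩

theorem _root_.DeltaRot.isDyckWord (hδ : IsIncFun δ) (hP : IsDyckWord n P)
    (h : DeltaRot δ P Q) : IsDyckWord n Q := by
  obtain ⟨A, W, B, rfl, rfl, hW⟩ := (deltaRot_iff hδ.nonneg).1 h
  obtain ⟨hup, hdown, hnonneg⟩ := isDyckWord_iff.1 hP
  refine isDyckWord_iff.2 ⟨by simpa using hup, by simp at hdown ⊢; lia, ?_⟩
  simp only [nonnegFrom_append, nonnegFrom_cons_true, nonnegFrom_cons_false, zero_add] at hnonneg ⊢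
  obtain ⟨hA, hA0, hA1, -, hB⟩ := hnonneg
  have hδ1 := hδ.le_one (A.count true + 1)
  have hW' : NonnegFrom (height A + 1) W := FirstPassage.nonnegFrom hδ hW (by lia)
  refine ⟨hA, hA0, hW', hW'.add_height_nonneg, ?_⟩
  convert hB using 1
  ring

theorem exists_isExcursionTail (hδ : IsIncFun δ) (hP : IsDyckWord n (A ++ true :: T)) :
    ∃ W B, T = W ++ B ∧ IsExcursionTail δ (A.count true) W := by
  obtain ⟨hup, hdown, hnonneg⟩ := isDyckWord_iff.1 hP
  have hA := (nonnegFrom_append.1 hnonneg).1.add_height_nonneg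
  have hend : height A + (height T + 1) = 0 := by
    rw [← height_cons_true, ← height_append, height, hup, hdown, sub_self]
  have hδ1 := hδ.le_one (A.count true + 1)
  exact exists_firstPassage hδ (hδ.nonneg _) (by lia)

theorem exists_deltaRot (hδ : IsIncFun δ) (hP : IsDyckWord n P) (h : Rot n δ (altitude δ P) g) :
    ∃ Q, DeltaRot δ P Q ∧ altitude δ Q = g := by
  obtain ⟨i, j, hgap, hB, hg⟩ := h
  have hi : i < P.count true := hP.1.symm ▸ hB.lt.trans_le hB.le_size
  obtain ⟨A, T, rfl, rfl⟩ := exists_eq_of_le_gap_altitude (k := 1) hi (pos_of_gap_pos hgap) hgap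
  obtain ⟨W, B, rfl, hW⟩ :=
    exists_isExcursionTail hδ (A := A ++ [false]) (T := T) (by simpa using hP)
  replace hW : IsExcursionTail δ (A.count true) W := by simpa using hW
  exact ⟨_, (deltaRot_iff hδ.nonneg).2 ⟨A, W, B, rfl, rfl, hW⟩,
    (hW.rotAt hP).unique ⟨hgap, hB, hg⟩⟩

theorem _root_.IsDyckWord.eq_of_altitude_eq (hP : IsDyckWord n P) (hQ : IsDyckWord n Q)
    (h : altitude δ P = altitude δ Q) : P = Q :=
  AltTamari.eq_of_altitude_eq (hP.1.trans hQ.1.symm) h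

theorem exists_isDyckWord_of_uniquePath (hδ : IsIncFun δ) (hP : IsDyckWord n P)
    (h : UniquePath (Rot n δ) k (altitude δ P) g) : ∃ Q, IsDyckWord n Q ∧ altitude δ Q = g := by
  have hS : ∀ P Q, P ∈ DyckSet n → DeltaRot δ P Q → Q ∈ DyckSet n :=
    fun _ _ hP h => h.isDyckWord hδ hP
  obtain ⟨Q, hPQ, hQ⟩ :=
    exists_reflTransGen_of_map hS (fun _ _ hP => exists_deltaRot hδ hP) hP h.le
  have hQS : Q ∈ DyckSet n := mem_of_reflTransGen hS hP hPQ
  exact ⟨Q, hQS, hQ⟩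

theorem linearInterval_and_intervalHeight_altLE_iff (hδ : IsIncFun δ) :
    LinearInterval (DyckSet n) (altLE δ) P Q ∧ IntervalHeight (DyckSet n) (altLE δ) P Q k ↔
      IsDyckWord n P ∧ IsDyckWord n Q ∧
        UniquePath (Rot n δ) k (altitude δ P) (altitude δ Q) := by
  have hφ : Set.InjOn (altitude δ) (DyckSet n) :=
    fun _ hP _ hQ h => IsDyckWord.eq_of_altitude_eq hP hQ h
  have hS : ∀ P Q, P ∈ DyckSet n → DeltaRot δ P Q → Q ∈ DyckSet n :=
    fun _ _ hP h => h.isDyckWord hδ hP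
  have hmap : ∀ P Q, P ∈ DyckSet n → DeltaRot δ P Q → Rot n δ (altitude δ P) (altitude δ Q) :=
    fun _ _ hP h => h.rot_altitude hδ.nonneg hP
  have hlift : ∀ P g, P ∈ DyckSet n → Rot n δ (altitude δ P) g →
      ∃ Q, DeltaRot δ P Q ∧ altitude δ Q = g := fun _ _ hP => exists_deltaRot hδ hP
  have hle {P Q : List Bool} (hP : P ∈ DyckSet n) (hQ : Q ∈ DyckSet n) :=
    reflTransGen_map_iff hφ hS hmap hlift hP hQ
  have hpath {P Q : List Bool} (hP : P ∈ DyckSet n) (hQ : Q ∈ DyckSet n) :=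
    uniquePath_map_iff (k := k) hφ hS hmap hlift hP hQ
  rw [altLE, linearInterval_and_intervalHeight_iff hS]
  · constructor
    · rintro ⟨hP, h⟩
      have hQ := mem_of_reflTransGen hS hP h.le
      exact ⟨hP, hQ, (hpath hP hQ).2 h⟩
    · rintro ⟨hP, hQ, h⟩
      exact ⟨hP, (hpath hP hQ).1 h⟩
  · intro P Q hP h hQP
    exact (hmap P Q hP h).not_reflTransGen ((hle (hS P Q hP h) hP).2 hQP)
  · intro P Q Q' hP h h' hQ
    have hle' := (hle (hS P Q hP h) (hS P Q' hP h')).2 hQ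
    exact hφ (hS P Q hP h) (hS P Q' hP h')
      ((hmap P Q hP h).eq_of_reflTransGen (hmap P Q' hP h') hle')

end Bridge

/-! ### Counting words -/

section Count

theorem ncard_eq_of_rel {α β : Type*} {s : Set α} {t : Set β} (ρ : α → β → Prop)
    (hs : ∀ a ∈ s, ∃! b, b ∈ t ∧ ρ a b) (ht : ∀ b ∈ t, ∃! a, a ∈ s ∧ ρ a b) :
    s.ncard = t.ncard := by
  choose f hf hf' using hs
  refine Set.ncard_congr f (fun a ha => (hf a ha).1) ?_ ?_
  · intro a a' ha ha' he
    exact (ht _ (hf a ha).1).unique ⟨ha, (hf a ha).2⟩ ⟨ha', he ▸ (hf a' ha').2⟩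
  · intro b hb
    obtain ⟨a, ⟨ha, hab⟩, -⟩ := ht b hb
    exact ⟨a, ha, (hf' a ha b ⟨hb, hab⟩).symm⟩

theorem ncard_eq_ncard_cons_true_add_ncard_cons_false {S : Set (List Bool)} (hfin : S.Finite)
    (hnil : [] ∉ S) : S.ncard = {w | true :: w ∈ S}.ncard + {w | false :: w ∈ S}.ncard := by
  have hS : S =
      List.cons true '' {w | true :: w ∈ S} ∪ List.cons false '' {w | false :: w ∈ S} := by
    ext w
    rcases w with _ | ⟨_ | _, w⟩ <;> simp [hnil]
  have hsub (x : Bool) : (List.cons x '' {w | x :: w ∈ S}).Finite :=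
    hfin.subset (Set.image_subset_iff.2 fun _ => id)
  have hdisj : Disjoint (List.cons true '' {w | true :: w ∈ S})
      (List.cons false '' {w | false :: w ∈ S}) := by
    rw [Set.disjoint_left]
    rintro _ ⟨w, -, rfl⟩ ⟨v, -, h⟩
    simp at h
  conv_lhs => rw [hS]
  rw [Set.ncard_union_eq hdisj (hsub _) (hsub _),
    Set.ncard_image_of_injective _ List.cons_injective,
    Set.ncard_image_of_injective _ List.cons_injective]

variable {n k p q r : ℕ} {A B A' B' w : List Bool}

/-- The words with `p` up steps and `q` down steps. -/
def words (p q : ℕ) : Set (List Bool) := {w | w.count true = p ∧ w.count false = q}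

theorem finite_words (p q : ℕ) : (words p q).Finite := by
  refine (List.finite_length_eq Bool (p + q)).subset ?_
  rintro w ⟨rfl, rfl⟩
  exact (List.count_true_add_count_false w).symm

theorem nil_mem_words_iff : [] ∈ words p q ↔ p + q = 0 := by
  simp only [words, Set.mem_ofPred_eq, List.count_nil]
  lia

theorem words_zero_zero : words 0 0 = {[]} := by
  ext w
  rcases w with _ | ⟨_ | _, w⟩ <;> simp [words]

theorem ncard_words (p q : ℕ) : (words p q).ncard = (p + q).choose p := by
  induction h : p + q generalizing p q with
  | zero =>
    obtain ⟨rfl, rfl⟩ := Nat.add_eq_zero_iff.1 h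
    rw [words_zero_zero, Set.ncard_singleton, Nat.choose_self]
  | succ N ih =>
    rw [ncard_eq_ncard_cons_true_add_ncard_cons_false (finite_words p q)
      (by rw [nil_mem_words_iff]; lia)]
    have htrue : {w | true :: w ∈ words p q}.ncard = if p = 0 then 0 else N.choose (p - 1) := by
      rcases p with _ | p
      · simp [words]
      · simp [words, ← ih p q (by lia)]
    have hfalse : {w | false :: w ∈ words p q}.ncard = if q = 0 then 0 else N.choose p := by
      rcases q with _ | q
      · simp [words]
      · simp [words, ← ih p q (by lia)]
    rw [htrue, hfalse]
    rcases p with _ | p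
    · simp [show q ≠ 0 by lia]
    · rw [Nat.choose_succ_succ]
      rcases q with _ | q
      · simp [Nat.choose_eq_zero_of_lt (show N < p + 1 by lia)]
      · simp

/-- The words with `p` up steps and `q` down steps some prefix of which has at least `r` more
down steps than up steps. -/
def deepWords (r p q : ℕ) : Set (List Bool) := {w ∈ words p q | ¬ NonnegFrom (r - 1) w}

theorem finite_deepWords (r p q : ℕ) : (deepWords r p q).Finite :=
  (finite_words p q).subset fun _ h => h.1

theorem deepWords_zero (p q : ℕ) : deepWords 0 p q = words p q :=
  Set.sep_eq_self_iff_mem_true.2 fun _ _ hw => absurd hw.nonneg (by simp)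

theorem deepWords_succ_zero_zero (r : ℕ) : deepWords (r + 1) 0 0 = ∅ := by
  ext w
  simp +contextual [deepWords, words_zero_zero, nonnegFrom_nil]

theorem cons_true_mem_deepWords_iff :
    true :: w ∈ deepWords (r + 1) (p + 1) q ↔ w ∈ deepWords (r + 2) p q := by
  simp [deepWords, words, nonnegFrom_cons_true, add_sub_assoc]

theorem cons_false_mem_deepWords_iff :
    false :: w ∈ deepWords (r + 1) p (q + 1) ↔ w ∈ deepWords r p q := by
  simp [deepWords, words, nonnegFrom_cons_false]

/-- The ballot numbers usually obtained by the reflection principle, here by Pascal's rule. -/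
theorem ncard_deepWords (hq : q ≤ p + r) :
    (deepWords r p q).ncard = (p + q).choose (p + r) := by
  induction h : p + q generalizing p q r with
  | zero =>
    obtain ⟨rfl, rfl⟩ := Nat.add_eq_zero_iff.1 h
    rcases r with _ | r
    · rw [deepWords_zero, words_zero_zero, Set.ncard_singleton, Nat.choose_self]
    · rw [deepWords_succ_zero_zero, Set.ncard_empty, Nat.choose_eq_zero_of_lt (by lia)]
  | succ N ih =>
    rcases r with _ | r
    · rw [deepWords_zero, ncard_words, h, add_zero]
    have htrue : {w | true :: w ∈ deepWords (r + 1) p q}.ncard = N.choose (p + r + 1) := by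
      rcases p with _ | p
      · rw [Nat.choose_eq_zero_of_lt (by lia)]
        simp [deepWords, words]
      · simp only [cons_true_mem_deepWords_iff, Set.ofPred_mem_eq]
        rw [ih (by lia) (by lia)]
        congr 1
        lia
    have hfalse : {w | false :: w ∈ deepWords (r + 1) p q}.ncard = N.choose (p + r) := by
      rcases q with _ | q
      · rw [Nat.choose_eq_zero_of_lt (by lia)]
        simp [deepWords, words]
      · simp only [cons_false_mem_deepWords_iff, Set.ofPred_mem_eq]
        exact ih (by lia) (by lia)
    rw [ncard_eq_ncard_cons_true_add_ncard_cons_false (finite_deepWords _ p q)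
      fun hnil => by have := nil_mem_words_iff.1 hnil.1; lia]
    rw [htrue, hfalse, ← add_assoc, Nat.choose_succ_succ, add_comm]

theorem finite_dyckSet (n : ℕ) : (DyckSet n).Finite :=
  (finite_words n n).subset fun _ h => ⟨h.1, h.2.1⟩

theorem ncard_dyckSet (n : ℕ) : (DyckSet n).ncard = (2 * n).choose n / (n + 1) := by
  have hdyck : DyckSet n = words n n \ deepWords 1 n n := by
    ext w
    simp only [DyckSet, Set.mem_ofPred_eq, isDyckWord_iff, words, deepWords, Set.mem_sdiff,
      Nat.cast_one, sub_self]
    tauto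
  have hsub : deepWords 1 n n ⊆ words n n := fun _ h => h.1
  have hchoose := Nat.choose_succ_right_eq (2 * n) n
  rw [two_mul, Nat.add_sub_cancel, ← two_mul] at hchoose
  rw [hdyck, Set.ncard_sdiff hsub (finite_deepWords 1 n n), ncard_words,
    ncard_deepWords n.le_succ, ← two_mul]
  refine (Nat.div_eq_of_eq_mul_left n.succ_pos ?_).symm
  rw [Nat.sub_mul, hchoose, Nat.mul_succ, Nat.add_sub_cancel_left]

/-- The Dyck words `A dᵏ u B` of size `n`, as pairs `(A, B)`: the marked up step is preceded by at
least `k` down steps. -/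
def markedWords (n k : ℕ) : Set (List Bool × List Bool) :=
  {p | IsDyckWord n (p.1 ++ (List.replicate k false ++ true :: p.2))}

theorem mem_markedWords_iff : (A, B) ∈ markedWords n k ↔
    A.count true + B.count true + 1 = n ∧ A.count false + B.count false + k = n ∧
      NonnegFrom 0 A ∧ k ≤ height A ∧ NonnegFrom (-height B) B := by
  have htrue : (A ++ (List.replicate k false ++ true :: B)).count true =
      A.count true + B.count true + 1 := by
    simp [List.count_replicate, add_assoc]
  have hfalse : (A ++ (List.replicate k false ++ true :: B)).count false =
      A.count false + B.count false + k := by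
    simp [add_assoc, add_comm k]
  have hheight : height (List.replicate k false) = -k := by simp [height, List.count_replicate]
  rw [markedWords, Set.mem_ofPred_eq, isDyckWord_iff, htrue, hfalse]
  refine and_congr_right fun h1 => and_congr_right fun h2 => ?_
  have hend : height A - k + 1 = -height B := by
    rw [height, height]
    lia
  rw [nonnegFrom_append, nonnegFrom_append, nonnegFrom_replicate_false, nonnegFrom_cons_true,
    hheight, zero_add, ← sub_eq_add_neg, hend, sub_nonneg, and_self_left]

/-- The idea is to split at the down step that first reaches the minimal height. -/
theorem exists_eq_append_false_cons (h : ¬ NonnegFrom 0 w) :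
    ∃ B A, w = B ++ false :: A ∧ NonnegFrom 0 A ∧ NonnegFrom (-height B) B := by
  induction w with
  | nil => exact (h (nonnegFrom_nil.2 le_rfl)).elim
  | cons x w ih =>
    by_cases hw : NonnegFrom 0 w
    · cases x
      · exact ⟨[], w, rfl, hw, nonnegFrom_nil.2 le_rfl⟩
      · exact (h (nonnegFrom_cons_true.2 ⟨le_rfl, hw.mono (by lia)⟩)).elim
    · obtain ⟨B, A, rfl, hA, hB⟩ := ih hw
      have hB0 := hB.nonneg
      refine ⟨x :: B, A, rfl, hA, ?_⟩
      cases x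
      · rw [nonnegFrom_cons_false, height_cons_false]
        exact ⟨by lia, hB.mono (by lia)⟩
      · have hneg : height B ≠ 0 := by
          intro h0
          rw [h0, neg_zero] at hB
          refine h ?_
          rw [nonnegFrom_cons_true, nonnegFrom_append, nonnegFrom_cons_false, h0]
          exact ⟨le_rfl, hB.mono (by lia), by lia, hA.mono (by lia)⟩
        rw [nonnegFrom_cons_true, height_cons_true]
        exact ⟨by lia, hB.mono (by lia)⟩

theorem append_false_cons_inj (hA : NonnegFrom 0 A) (hB : NonnegFrom (-height B) B)
    (hA' : NonnegFrom 0 A') (hB' : NonnegFrom (-height B') B')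
    (h : B ++ false :: A = B' ++ false :: A') : A = A' ∧ B = B' := by
  have hsuffix {A B A' B' C : List Bool} (hA : NonnegFrom 0 A) (hB' : NonnegFrom (-height B') B')
      (hBC : B' = B ++ C) (hC : false :: A = C ++ false :: A') : A = A' ∧ B = B' := by
    rcases C with _ | ⟨x, C⟩
    · exact ⟨(List.cons.inj hC).2, by simpa using hBC.symm⟩
    · obtain ⟨rfl, rfl⟩ := List.cons.inj hC
      have hC0 := (nonnegFrom_cons_false.1 (nonnegFrom_append.1 hA).2).2.nonneg
      rw [hBC, nonnegFrom_append, nonnegFrom_cons_false, height_append, height_cons_false] at hB'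
      have := hB'.2.2.nonneg
      lia
  rcases List.append_eq_append_iff.1 h with ⟨C, hBC, hC⟩ | ⟨C, hBC, hC⟩
  · exact hsuffix hA hB' hBC hC
  · exact (hsuffix hA' hB hBC hC).imp Eq.symm Eq.symm

/-- The bijection is `A dᵏ u B ↦ B d A`. -/
theorem ncard_markedWords (hk : 0 < k) (hkn : k ≤ n) :
    (markedWords n k).ncard = (2 * n - k).choose (n + 1) := by
  have hdeep := ncard_deepWords (r := 2) (p := n - 1) (q := n - k + 1) (by lia)
  rw [show n - 1 + (n - k + 1) = 2 * n - k by lia, show n - 1 + 2 = n + 1 by lia] at hdeep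
  rw [← hdeep]
  have hnonneg (A B : List Bool) : NonnegFrom ((2 : ℕ) - 1) (B ++ false :: A) ↔
      NonnegFrom 1 B ∧ 0 ≤ 1 + height B ∧ NonnegFrom (height B) A := by
    rw [nonnegFrom_append, nonnegFrom_cons_false]
    norm_num
  refine Set.ncard_congr (fun p _ => p.2 ++ false :: p.1) ?_ ?_ ?_
  · rintro ⟨A, B⟩ hAB
    obtain ⟨htrue, hfalse, -, hA, -⟩ := mem_markedWords_iff.1 hAB
    refine ⟨⟨by simp; lia, by simp; lia⟩, fun hw => ?_⟩
    have hB := ((hnonneg A B).1 hw).2.2.nonneg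
    rw [height] at hA hB
    lia
  · rintro ⟨A, B⟩ ⟨A', B'⟩ hAB hAB' he
    obtain ⟨-, -, hA, -, hB⟩ := mem_markedWords_iff.1 hAB
    obtain ⟨-, -, hA', -, hB'⟩ := mem_markedWords_iff.1 hAB'
    obtain ⟨rfl, rfl⟩ := append_false_cons_inj hA hB hA' hB' he
    rfl
  · rintro w ⟨⟨htrue, hfalse⟩, hw⟩
    obtain ⟨B, A, rfl, hA, hB⟩ := exists_eq_append_false_cons fun h => hw (h.mono (by simp))
    have hneg : height B ≠ 0 := fun h0 =>
      hw ((hnonneg A B).2 ⟨hB.mono (by lia), by lia, h0.symm ▸ hA⟩)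
    have hB0 := hB.nonneg
    refine ⟨(A, B), mem_markedWords_iff.2 ?_, rfl⟩
    simp only [List.count_append, List.count_cons_self,
      List.count_cons_of_ne Bool.false_ne_true] at htrue hfalse
    refine ⟨by lia, by lia, hA, ?_, hB⟩
    rw [height] at hneg hB0 ⊢
    lia

/-- The mirror image of a word. -/
def mirror (w : List Bool) : List Bool := (w.map not).reverse

theorem mirror_append (v w : List Bool) : mirror (v ++ w) = mirror w ++ mirror v := by
  simp [mirror]

theorem mirror_involutive : Function.Involutive mirror := fun w => by
  simp [mirror, Function.comp_def]

theorem count_mirror (w : List Bool) (x : Bool) : (mirror w).count x = w.count (!x) := by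
  rw [mirror, List.count_reverse, ← List.count_map_of_injective w not Bool.not_injective,
    Bool.not_not]

theorem _root_.IsDyckWord.mirror (h : IsDyckWord n w) : IsDyckWord n (mirror w) := by
  obtain ⟨htrue, hfalse, hprefix⟩ := h
  refine ⟨by rw [count_mirror]; exact hfalse, by rw [count_mirror]; exact htrue, ?_⟩
  rintro p ⟨q, hpq⟩
  have hw : w = AltTamari.mirror q ++ AltTamari.mirror p := by
    rw [← mirror_append, hpq, mirror_involutive]
  have hq := hprefix (AltTamari.mirror q) ⟨_, hw.symm⟩
  rw [hw] at htrue hfalse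
  simp only [List.count_append, count_mirror, Bool.not_true, Bool.not_false] at htrue hfalse hq
  lia

/-- The Dyck words `A d uᵏ B` of size `n`, as pairs `(A, B)`. -/
def mirrorMarkedWords (n k : ℕ) : Set (List Bool × List Bool) :=
  {p | IsDyckWord n (p.1 ++ false :: (List.replicate k true ++ p.2))}

theorem ncard_mirrorMarkedWords (n k : ℕ) :
    (mirrorMarkedWords n k).ncard = (markedWords n k).ncard := by
  have hleft (A B : List Bool) : mirror (A ++ (List.replicate k false ++ true :: B)) =
      mirror B ++ false :: (List.replicate k true ++ mirror A) := by
    simp [mirror]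
  have hright (A B : List Bool) : mirror (A ++ false :: (List.replicate k true ++ B)) =
      mirror B ++ (List.replicate k false ++ true :: mirror A) := by
    simp [mirror]
  refine Set.ncard_congr (fun p _ => (mirror p.2, mirror p.1)) ?_ ?_ ?_
  · rintro ⟨A, B⟩ h
    have := IsDyckWord.mirror h
    rwa [hright] at this
  · rintro ⟨A, B⟩ ⟨A', B'⟩ - - h
    obtain ⟨hB, hA⟩ := Prod.mk.inj h
    exact Prod.ext (mirror_involutive.injective hA) (mirror_involutive.injective hB)
  · rintro ⟨A, B⟩ h
    have := IsDyckWord.mirror h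
    rw [hleft] at this
    refine ⟨(mirror B, mirror A), this, ?_⟩
    exact Prod.ext (mirror_involutive A) (mirror_involutive B)

end Count

/-! ### Counting linear intervals -/

section Strip

variable {δ : ℕ → ℤ} {n k i j s : ℕ} {c : ℤ} {A B P T T' X X' : List Bool}

/-- `Strip δ k s T X`: the word `T`, read after `s` up steps, begins with `k` consecutive
δ-excursions, and `X` is what remains of `T` when their initial up steps are deleted. -/
def Strip (δ : ℕ → ℤ) : ℕ → ℕ → List Bool → List Bool → Prop
  | 0, _, T, X => T = X
  | k + 1, s, T, X => ∃ W T' X', T = true :: (W ++ T') ∧ X = W ++ X' ∧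
      IsExcursionTail δ s W ∧ Strip δ k (s + (W.count true + 1)) T' X'

theorem Strip.right_unique (h : Strip δ k s T X) (h' : Strip δ k s T X') : X = X' := by
  induction k generalizing s T X X' with
  | zero => exact Eq.trans (Eq.symm h) h'
  | succ k ih =>
    obtain ⟨W, T, X, rfl, rfl, hW, h⟩ := h
    obtain ⟨W', T', X', e, rfl, hW', h'⟩ := h'
    obtain ⟨rfl, rfl⟩ := FirstPassage.unique hW hW' (List.cons.inj e).2
    rw [ih h h']

theorem Strip.left_unique (h : Strip δ k s T X) (h' : Strip δ k s T' X) : T = T' := by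
  induction k generalizing s T T' X with
  | zero => exact Eq.trans h (Eq.symm h')
  | succ k ih =>
    obtain ⟨W, T, X, rfl, rfl, hW, h⟩ := h
    obtain ⟨W', T', X', rfl, e, hW', h'⟩ := h'
    obtain ⟨rfl, rfl⟩ := FirstPassage.unique hW hW' e
    rw [ih h h']

theorem Strip.count_true (h : Strip δ k s T X) : T.count true = k + X.count true := by
  induction k generalizing s T X with
  | zero => rw [show T = X from h, zero_add]
  | succ k ih =>
    obtain ⟨W, T, X, rfl, rfl, -, h⟩ := h
    rw [List.count_cons_self, List.count_append, List.count_append, ih h]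
    lia

theorem Strip.count_false (h : Strip δ k s T X) : T.count false = X.count false := by
  induction k generalizing s T X with
  | zero => rw [show T = X from h]
  | succ k ih =>
    obtain ⟨W, T, X, rfl, rfl, -, h⟩ := h
    simp [ih h]

theorem Strip.exists_eq_cons (h : Strip δ (k + 1) s T X) : ∃ T', T = true :: T' := by
  obtain ⟨W, T', -, rfl, -⟩ := h
  exact ⟨_, rfl⟩

theorem exists_strip (hδ : IsIncFun δ) (hX : height X + k ≤ 0) : ∃ T, Strip δ k s T X := by
  induction k generalizing s X with
  | zero => exact ⟨X, rfl⟩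
  | succ k ih =>
    have hδ1 := hδ.le_one (s + 1)
    obtain ⟨W, X, rfl, hW⟩ := exists_firstPassage hδ (hδ.nonneg (s + 1)) (w := X)
      (s := s + 1) (by lia)
    have hW0 := FirstPassage.nonneg_add_height hδ hW
    rw [height_append] at hX
    obtain ⟨T, hT⟩ := ih (s := s + (W.count true + 1)) (X := X) (by lia)
    exact ⟨_, W, T, X, rfl, rfl, hW, hT⟩

theorem Strip.nonnegFrom_iff (hδ : IsIncFun δ) (h : Strip δ k s T X) (hc : 0 ≤ c) :
    NonnegFrom c T ↔ NonnegFrom (c + k) X := by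
  induction k generalizing s T X c with
  | zero => rw [show T = X from h, Nat.cast_zero, add_zero]
  | succ k ih =>
    obtain ⟨W, T, X, rfl, rfl, hW, h⟩ := h
    have hδ1 := hδ.le_one (s + 1)
    have hW' : NonnegFrom (c + 1) W := FirstPassage.nonnegFrom hδ hW (by lia)
    have hshift : c + 1 + height W + k = c + (k + 1 : ℕ) + height W := by
      push_cast
      ring
    rw [nonnegFrom_cons_true, nonnegFrom_append, nonnegFrom_append, ih h hW'.add_height_nonneg,
      hshift]
    simp only [hc, hW', hW'.mono (show c + 1 ≤ c + (k + 1 : ℕ) by lia), true_and]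

theorem Strip.isDyckWord_iff (hδ : IsIncFun δ) (h : Strip δ k s T X) :
    IsDyckWord n (A ++ T) ↔ IsDyckWord n (A ++ (List.replicate k true ++ X)) := by
  have hnonneg : NonnegFrom 0 (A ++ T) ↔
      NonnegFrom 0 (A ++ (List.replicate k true ++ X)) := by
    rw [nonnegFrom_append, nonnegFrom_append]
    refine and_congr_right fun hA => ?_
    rw [h.nonnegFrom_iff hδ hA.add_height_nonneg,
      nonnegFrom_replicate_true_append hA.add_height_nonneg]
  rw [AltTamari.isDyckWord_iff, AltTamari.isDyckWord_iff, hnonneg]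
  simp [h.count_true, h.count_false, List.count_replicate]

theorem exists_strip_of_isDyckWord (hδ : IsIncFun δ)
    (h : IsDyckWord n (A ++ false :: (List.replicate k true ++ X))) :
    ∃ T, Strip δ k (A.count true) T X := by
  obtain ⟨hup, hdown, hnonneg⟩ := isDyckWord_iff.1 h
  have hA := (nonnegFrom_cons_false.1 (nonnegFrom_append.1 hnonneg).2).2.nonneg
  have hk : height (List.replicate k true) = k := by simp [height, List.count_replicate]
  have hend : height A + (k + height X - 1) = 0 := by
    rw [← hk, ← height_append, ← height_cons_false, ← height_append, height, hup, hdown, sub_self]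
  exact exists_strip hδ (by lia)

theorem Strip.exists_isChain (h : Strip δ (k + 1) (A.count true) T X)
    (hn : (A ++ T).count true = n) :
    ∃ j, IsChain n (altitude δ (A ++ T)) (k + 1) (A.count true) j := by
  induction k generalizing A T X with
  | zero =>
    obtain ⟨W, T, -, rfl, -, hW, -⟩ := h
    exact ⟨_, .single (hW.isBlock hn)⟩
  | succ k ih =>
    obtain ⟨W, T, X, rfl, -, hW, h⟩ := h
    have hlevel := hW.altitude_end T
    obtain ⟨T', rfl⟩ := h.exists_eq_cons
    obtain ⟨j, hC⟩ := ih (A := A ++ true :: W) (by simpa using h) (by simpa using hn)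
    exact ⟨j, .cons (hW.isBlock hn) (by simpa [downsBefore] using hlevel) (by simpa using hC)⟩

theorem IsChain.exists_strip (hδ : IsIncFun δ) (hP : IsDyckWord n (A ++ true :: T))
    (h : IsChain n (altitude δ (A ++ true :: T)) k (A.count true) j) :
    ∃ X, Strip δ k (A.count true) (true :: T) X := by
  generalize hf : altitude δ (A ++ true :: T) = f at h
  generalize hi : A.count true = i at h ⊢
  induction h generalizing A T with subst hf hi
  | single hB =>
    obtain ⟨W, B, rfl, hW⟩ := exists_isExcursionTail hδ hP
    exact ⟨W ++ B, W, B, B, rfl, rfl, hW, rfl⟩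
  | cons hB he hC ih =>
    obtain ⟨W, B, rfl, hW⟩ := exists_isExcursionTail hδ hP
    obtain rfl := hB.unique (hW.isBlock hP.1)
    obtain ⟨B, rfl⟩ : ∃ B', B = true :: B' := by
      have hlt := hC.lt
      have hle := hC.le_size
      have hn := hP.1
      rw [hW.altitude_end] at he
      rcases B with _ | ⟨_ | _, B⟩
      · simp at hn
        lia
      · simp [downsBefore] at he
        lia
      · exact ⟨B, rfl⟩
    obtain ⟨X, hX⟩ := ih (A := A ++ true :: W) (T := B) (by simpa using hP) (by simp) (by simp)
    exact ⟨W ++ X, W, true :: B, X, rfl, rfl, hW, hX⟩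

theorem exists_leftMove_iff (hδ : IsIncFun δ) (hk : 0 < k) (hP : IsDyckWord n P) :
    (∃ g, LeftMove n δ k i (altitude δ P) g) ↔
      ∃ A B, P = A ++ (List.replicate k false ++ true :: B) ∧ A.count true = i := by
  constructor
  · rintro ⟨g, hgap, j, hB, -⟩
    have hi : i < P.count true := hP.1.symm ▸ hB.lt.trans_le hB.le_size
    have hpos : 0 < gap δ (altitude δ P) i := by lia
    exact exists_eq_of_le_gap_altitude hi (pos_of_gap_pos hpos) hgap
  · rintro ⟨A, B, rfl, rfl⟩
    obtain ⟨k, rfl⟩ := Nat.exists_eq_add_of_lt hk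
    rw [zero_add] at hP ⊢
    have hA : 0 < A.count true := hP.count_true_pos
    obtain ⟨W, B, rfl, hW⟩ := exists_isExcursionTail hδ
      (A := A ++ List.replicate (k + 1) false) (T := B) (by simpa using hP)
    have hB := hW.isBlock (B := B) (by simpa using hP.1)
    exact ⟨_, le_gap_altitude hA, _, by simpa [List.count_replicate] using hB, rfl⟩

theorem exists_rightMove_iff (hδ : IsIncFun δ) (hP : IsDyckWord n P) :
    (∃ g, RightMove n δ (k + 1) i (altitude δ P) g) ↔
      ∃ A T X, P = A ++ false :: T ∧ A.count true = i ∧ Strip δ (k + 1) i T X := by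
  constructor
  · rintro ⟨g, hgap, j, hC, -⟩
    have hi : i < P.count true := hP.1.symm ▸ hC.lt.trans_le hC.le_size
    obtain ⟨A, T, rfl, rfl⟩ :=
      exists_eq_of_le_gap_altitude (k := 1) hi (pos_of_gap_pos hgap) hgap
    obtain ⟨X, hX⟩ := IsChain.exists_strip hδ (A := A ++ [false]) (T := T) (k := k + 1) (j := j)
      (by simpa using hP) (by simpa using hC)
    exact ⟨A, true :: T, X, by simp, rfl, by simpa using hX⟩
  · rintro ⟨A, T, X, rfl, rfl, hX⟩
    obtain ⟨j, hC⟩ := Strip.exists_isChain (A := A ++ [false]) (n := n) (by simpa using hX)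
      (by simpa using hP.1)
    obtain ⟨T, rfl⟩ := hX.exists_eq_cons
    refine ⟨_, ?_, j, by simpa using hC, rfl⟩
    exact Int.lt_iff_add_one_le.2 (le_gap_altitude (k := 1) hP.count_true_pos)

end Strip

section Moves

variable {δ f g g' : ℕ → ℤ} {n k i i' : ℕ} {P Q : List Bool} {M : ℕ → (ℕ → ℤ) → (ℕ → ℤ) → Prop}

theorem LeftMove.right_unique (h : LeftMove n δ k i f g) (h' : LeftMove n δ k i f g') : g = g' := by
  obtain ⟨-, j, hB, rfl⟩ := h
  obtain ⟨-, j', hB', rfl⟩ := h'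
  rw [hB.unique hB']

theorem RightMove.right_unique (h : RightMove n δ k i f g) (h' : RightMove n δ k i f g') :
    g = g' := by
  obtain ⟨-, j, hC, rfl⟩ := h
  obtain ⟨-, j', hC', rfl⟩ := h'
  rw [hC.unique hC']

theorem LeftMove.index_unique (hk : k ≠ 0) (h : LeftMove n δ k i f g)
    (h' : LeftMove n δ k i' f g) : i = i' := by
  obtain ⟨-, j, hB, rfl⟩ := h
  obtain ⟨-, j', hB', he⟩ := h'
  exact raise_index_unique hB.lt hB'.lt (mod_cast hk) (mod_cast hk) he

theorem RightMove.index_unique (h : RightMove n δ k i f g) (h' : RightMove n δ k i' f g) :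
    i = i' := by
  obtain ⟨-, j, hC, rfl⟩ := h
  obtain ⟨-, j', hC', he⟩ := h'
  exact raise_index_unique hC.lt hC'.lt one_ne_zero one_ne_zero he

theorem LeftMove.not_rightMove {l : ℕ} (hk : 2 ≤ k) (h : LeftMove n δ k i f g) :
    ¬ RightMove n δ l i' f g := by
  rintro ⟨-, j', hC, he⟩
  obtain ⟨-, j, hB, rfl⟩ := h
  obtain rfl : i = i' := raise_index_unique hB.lt hC.lt (by lia) one_ne_zero he
  have hi := congrFun he i
  rw [raise_apply, raise_apply, if_pos ⟨le_rfl, hB.lt⟩, if_pos ⟨le_rfl, hC.lt⟩] at hi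
  lia

/-- The pairs of Dyck words related by a move of type `M` at some up step; `M` stands for a
`LeftMove` or a `RightMove` of fixed length. -/
def movePairs (δ : ℕ → ℤ) (n : ℕ) (M : ℕ → (ℕ → ℤ) → (ℕ → ℤ) → Prop) :
    Set (List Bool × List Bool) :=
  {p | IsDyckWord n p.1 ∧ IsDyckWord n p.2 ∧ ∃ i, M i (altitude δ p.1) (altitude δ p.2)}

/-- The Dyck words with a marked up step, given by its index, at which a move of type `M` is
possible. -/
def moveSites (δ : ℕ → ℤ) (n : ℕ) (M : ℕ → (ℕ → ℤ) → (ℕ → ℤ) → Prop) : Set (List Bool × ℕ) :=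
  {p | IsDyckWord n p.1 ∧ ∃ g, M p.2 (altitude δ p.1) g}

theorem finite_movePairs (δ : ℕ → ℤ) (n : ℕ) (M : ℕ → (ℕ → ℤ) → (ℕ → ℤ) → Prop) :
    (movePairs δ n M).Finite :=
  ((finite_dyckSet n).prod (finite_dyckSet n)).subset fun _ hp => ⟨hp.1, hp.2.1⟩

theorem ncard_movePairs (hδ : IsIncFun δ) (hright : ∀ i f g g', M i f g → M i f g' → g = g')
    (hindex : ∀ i i' f g, M i f g → M i' f g → i = i')
    (hpath : ∀ i P g, M i (altitude δ P) g → UniquePath (Rot n δ) k (altitude δ P) g) :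
    (movePairs δ n M).ncard = (moveSites δ n M).ncard := by
  refine ncard_eq_of_rel
    (fun p q => p.1 = q.1 ∧ M q.2 (altitude δ p.1) (altitude δ p.2)) ?_ ?_
  · rintro ⟨P, Q⟩ ⟨hP, -, i, h⟩
    refine ⟨(P, i), ⟨⟨hP, _, h⟩, rfl, h⟩, ?_⟩
    rintro ⟨P', i'⟩ ⟨-, rfl, h'⟩
    exact Prod.ext rfl (hindex _ _ _ _ h' h)
  · rintro ⟨P, i⟩ ⟨hP, g, h⟩
    obtain ⟨Q, hQ, rfl⟩ := exists_isDyckWord_of_uniquePath hδ hP (hpath i P g h)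
    refine ⟨(P, Q), ⟨⟨hP, hQ, i, h⟩, rfl, h⟩, ?_⟩
    rintro ⟨P', Q'⟩ ⟨⟨-, hQ', -⟩, rfl, h'⟩
    exact Prod.ext rfl (hQ'.eq_of_altitude_eq hQ (hright _ _ _ _ h' h))

theorem ncard_moveSites_leftMove (hδ : IsIncFun δ) (hk : 0 < k) :
    (moveSites δ n (LeftMove n δ k)).ncard = (markedWords n k).ncard := by
  refine ncard_eq_of_rel (fun p q => p.1 = q.1 ++ (List.replicate k false ++ true :: q.2) ∧
    p.2 = q.1.count true) ?_ ?_
  · rintro ⟨P, i⟩ ⟨hP, h⟩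
    obtain ⟨A, B, rfl, rfl⟩ := (exists_leftMove_iff hδ hk hP).1 h
    refine ⟨(A, B), ⟨hP, rfl, rfl⟩, ?_⟩
    rintro ⟨A', B'⟩ ⟨-, he, hi⟩
    dsimp only at he hi
    rw [← List.append_assoc, ← List.append_assoc] at he
    obtain ⟨hA, rfl⟩ := append_true_cons_inj he (by simpa [List.count_replicate] using hi)
    rw [List.append_cancel_right hA]
  · rintro ⟨A, B⟩ hAB
    have hP : IsDyckWord n (A ++ (List.replicate k false ++ true :: B)) := hAB
    have hmove := (exists_leftMove_iff hδ hk hP).2 ⟨A, B, rfl, rfl⟩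
    refine ⟨(_, A.count true), ⟨⟨hP, hmove⟩, rfl, rfl⟩, ?_⟩
    rintro ⟨P, i⟩ ⟨-, rfl, rfl⟩
    rfl

theorem Strip.unique_of_append_eq {A A' T T' X X' : List Bool}
    (h : Strip δ (k + 1) (A.count true) T X) (h' : Strip δ (k + 1) (A'.count true) T' X')
    (he : A ++ false :: T = A' ++ false :: T') (hA : A.count true = A'.count true) :
    A = A' ∧ X = X' := by
  obtain ⟨S, rfl⟩ := h.exists_eq_cons
  obtain ⟨S', rfl⟩ := h'.exists_eq_cons
  obtain ⟨hAA, rfl⟩ := append_true_cons_inj (v := A ++ [false]) (v' := A' ++ [false])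
    (by simpa using he) (by simpa using hA)
  obtain rfl := List.append_cancel_right hAA
  exact ⟨rfl, h.right_unique h'⟩

theorem ncard_moveSites_rightMove (hδ : IsIncFun δ) :
    (moveSites δ n (RightMove n δ (k + 1))).ncard = (mirrorMarkedWords n (k + 1)).ncard := by
  have hstrip {A T X : List Bool} (h : Strip δ (k + 1) (A.count true) T X) :
      IsDyckWord n (A ++ false :: T) ↔ (A, X) ∈ mirrorMarkedWords n (k + 1) := by
    simpa [mirrorMarkedWords] using h.isDyckWord_iff hδ (n := n) (A := A ++ [false])
  refine ncard_eq_of_rel (fun p q => ∃ T, p.1 = q.1 ++ false :: T ∧ p.2 = q.1.count true ∧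
    Strip δ (k + 1) (q.1.count true) T q.2) ?_ ?_
  · rintro ⟨P, i⟩ ⟨hP, h⟩
    obtain ⟨A, T, X, rfl, rfl, hX⟩ := (exists_rightMove_iff hδ hP).1 h
    refine ⟨(A, X), ⟨(hstrip hX).1 hP, T, rfl, rfl, hX⟩, ?_⟩
    rintro ⟨A', X'⟩ ⟨-, T', he, hi, hX'⟩
    obtain ⟨rfl, rfl⟩ := hX.unique_of_append_eq hX' he hi
    rfl
  · rintro ⟨A, X⟩ hAX
    obtain ⟨T, hT⟩ := exists_strip_of_isDyckWord hδ hAX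
    have hP := (hstrip hT).2 hAX
    refine ⟨(A ++ false :: T, A.count true),
      ⟨⟨hP, (exists_rightMove_iff hδ hP).2 ⟨A, T, X, rfl, rfl, hT⟩⟩, T, rfl, rfl, hT⟩, ?_⟩
    rintro ⟨P, i⟩ ⟨-, T', rfl, rfl, hT'⟩
    rw [hT.left_unique hT']

theorem ncard_movePairs_leftMove (hδ : IsIncFun δ) (hk : 0 < k) (hkn : k ≤ n) :
    (movePairs δ n (LeftMove n δ k)).ncard = (2 * n - k).choose (n + 1) := by
  rw [ncard_movePairs (M := LeftMove n δ k) hδ (fun _ _ _ _ => LeftMove.right_unique)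
    (fun _ _ _ _ => LeftMove.index_unique hk.ne') (fun _ _ _ => LeftMove.uniquePath),
    ncard_moveSites_leftMove hδ hk, ncard_markedWords hk hkn]

theorem ncard_movePairs_rightMove (hδ : IsIncFun δ) (hkn : k + 1 ≤ n) :
    (movePairs δ n (RightMove n δ (k + 1))).ncard = (2 * n - (k + 1)).choose (n + 1) := by
  rw [ncard_movePairs (M := RightMove n δ (k + 1)) hδ (fun _ _ _ _ => RightMove.right_unique)
    (fun _ _ _ _ => RightMove.index_unique)
    (fun _ P _ => RightMove.uniquePath (gap_altitude_nonneg δ P)),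
    ncard_moveSites_rightMove hδ, ncard_mirrorMarkedWords, ncard_markedWords k.succ_pos hkn]

theorem LeftMove.lt_size (hδ : IsIncFun δ) (hk : 0 < k) (hP : IsDyckWord n P)
    (h : LeftMove n δ k i (altitude δ P) g) : k < n := by
  obtain ⟨A, B, rfl, -⟩ := (exists_leftMove_iff hδ hk hP).1 ⟨g, h⟩
  obtain ⟨hup, -, -, hheight, -⟩ := mem_markedWords_iff.1 hP
  rw [height] at hheight
  lia

theorem RightMove.lt_size (h : RightMove n δ k i f g) : k < n := by
  obtain ⟨hgap, j, hC, -⟩ := h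
  have := pos_of_gap_pos hgap
  have := hC.add_le
  have := hC.le_size
  lia

end Moves

section LinearIntervals

variable {δ : ℕ → ℤ} {n k : ℕ} {P Q : List Bool}

/-- The linear intervals of height `k` of the alt-Tamari poset, as pairs of endpoints. -/
def linearIntervals (δ : ℕ → ℤ) (n k : ℕ) : Set (List Bool × List Bool) :=
  {pq | LinearInterval (DyckSet n) (altLE δ) pq.1 pq.2 ∧
    IntervalHeight (DyckSet n) (altLE δ) pq.1 pq.2 k}

theorem linearIntervals_succ (hδ : IsIncFun δ) (n k : ℕ) :
    linearIntervals δ n (k + 1) =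
      movePairs δ n (LeftMove n δ (k + 1)) ∪ movePairs δ n (RightMove n δ (k + 1)) := by
  ext ⟨P, Q⟩
  rw [linearIntervals, Set.mem_ofPred_eq, linearInterval_and_intervalHeight_altLE_iff hδ]
  constructor
  · rintro ⟨hP, hQ, h⟩
    exact (h.leftMove_or_rightMove hδ.nonneg (gap_altitude_nonneg δ P)).imp
      (⟨hP, hQ, ·⟩) (⟨hP, hQ, ·⟩)
  · rintro (⟨hP, hQ, i, h⟩ | ⟨hP, hQ, i, h⟩)
    · exact ⟨hP, hQ, h.uniquePath⟩
    · exact ⟨hP, hQ, h.uniquePath (gap_altitude_nonneg δ P)⟩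

theorem ncard_linearIntervals_zero (hδ : IsIncFun δ) (n : ℕ) :
    (linearIntervals δ n 0).ncard = (2 * n).choose n / (n + 1) := by
  have hdiag : linearIntervals δ n 0 = (fun P => (P, P)) '' DyckSet n := by
    ext ⟨P, Q⟩
    rw [linearIntervals, Set.mem_ofPred_eq, linearInterval_and_intervalHeight_altLE_iff hδ]
    constructor
    · rintro ⟨hP, hQ, h⟩
      exact ⟨P, hP, Prod.ext rfl (hP.eq_of_altitude_eq hQ h)⟩
    · rintro ⟨P, hP, ⟨⟩⟩
      exact ⟨hP, hP, rfl⟩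
  rw [hdiag, Set.ncard_image_of_injective _ fun _ _ h => congrArg Prod.fst h, ncard_dyckSet]

theorem ncard_linearIntervals_one (hδ : IsIncFun δ) (hn : 1 ≤ n) :
    (linearIntervals δ n 1).ncard = (2 * n - 1).choose (n + 1) := by
  have hmoves : RightMove n δ 1 = LeftMove n δ 1 := by
    ext i f g
    rw [leftMove_one_iff, rightMove_one_iff]
  rw [linearIntervals_succ hδ, zero_add, hmoves, Set.union_self,
    ncard_movePairs_leftMove hδ one_pos hn]

theorem ncard_linearIntervals_of_two_le (hδ : IsIncFun δ) (hk : 2 ≤ k) (hkn : k < n) :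
    (linearIntervals δ n k).ncard = 2 * (2 * n - k).choose (n - k - 1) := by
  obtain ⟨k, rfl⟩ := Nat.exists_eq_add_of_le' (one_le_two.trans hk)
  have hdisj : Disjoint (movePairs δ n (LeftMove n δ (k + 1)))
      (movePairs δ n (RightMove n δ (k + 1))) :=
    Set.disjoint_left.2 fun _ ⟨_, _, _, h⟩ ⟨_, _, _, h'⟩ => h.not_rightMove hk h'
  rw [linearIntervals_succ hδ,
    Set.ncard_union_eq hdisj (finite_movePairs _ _ _) (finite_movePairs _ _ _),
    ncard_movePairs_leftMove hδ k.succ_pos hkn.le, ncard_movePairs_rightMove hδ hkn.le, ← two_mul,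
    Nat.choose_symm_of_eq_add (show 2 * n - (k + 1) = n + 1 + (n - (k + 1) - 1) by lia)]

theorem lt_size_of_mem_linearIntervals (hδ : IsIncFun δ) (hn : 1 ≤ n)
    (h : (P, Q) ∈ linearIntervals δ n k) : k < n := by
  cases k with
  | zero => exact hn
  | succ k =>
    rw [linearIntervals_succ hδ] at h
    rcases h with ⟨hP, -, i, h⟩ | ⟨-, -, i, h⟩
    · exact h.lt_size hδ k.succ_pos hP
    · exact h.lt_size

end LinearIntervals

end AltTamari

/-- counts of linear intervals of each height in the alt-Tamari poset
`Tam^δ_n`.  (Note: `binom (2n-1) (n-2)` is written in the symmetric form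
`binom (2n-1) (n+1)` to avoid the truncation of natural subtraction at `n = 1`.) -/
theorem stmt0 (n : ℕ) (hn : 1 ≤ n) (δ : ℕ → ℤ) (hδ : IsIncFun δ) :
    {pq : List Bool × List Bool |
        LinearInterval (DyckSet n) (altLE δ) pq.1 pq.2 ∧
          IntervalHeight (DyckSet n) (altLE δ) pq.1 pq.2 (0)}.ncard = (2 * n).choose n / (n + 1) ∧
    {pq : List Bool × List Bool |
        LinearInterval (DyckSet n) (altLE δ) pq.1 pq.2 ∧
          IntervalHeight (DyckSet n) (altLE δ) pq.1 pq.2 (1)}.ncard = (2 * n - 1).choose (n + 1) ∧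
    (∀ k, 2 ≤ k → k < n →
      {pq : List Bool × List Bool |
        LinearInterval (DyckSet n) (altLE δ) pq.1 pq.2 ∧
          IntervalHeight (DyckSet n) (altLE δ) pq.1 pq.2 (k)}.ncard = 2 * (2 * n - k).choose (n - k - 1)) ∧
    (∀ k, n ≤ k → ∀ P Q : List Bool,
      ¬ (LinearInterval (DyckSet n) (altLE δ) P Q ∧
          IntervalHeight (DyckSet n) (altLE δ) P Q k)) := by
  refine ⟨AltTamari.ncard_linearIntervals_zero hδ n, AltTamari.ncard_linearIntervals_one hδ hn,
    fun k hk hkn => AltTamari.ncard_linearIntervals_of_two_le hδ hk hkn, fun k hkn P Q h => ?_⟩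
  exact hkn.not_gt (AltTamari.lt_size_of_mem_linearIntervals hδ hn h)
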